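/- arXiv:1507.07498 — 2 statements merged into one kernel-verified Lean document; each statement's English description precedes it below -/
import Mathlib

section
/- For all k = (k1,k2,k3,k4) and m = (m1,m2,m3,m4) with nonnegative integer entries, Σ(k+m) = Σ(k) + Σ(m), where the right-hand side is the Minkowski sum {p + p' : p ∈ Σ(k), p' ∈ Σ(m)} inside ℤ^12. (This is Theorem 1 of the paper: Σ^f(λ+μ) = Σ^f(λ) + Σ^f(μ) for dominant weights λ, μ of the Lie algebra of type D4.) -/
open Pointwise

/-- The 70 linear inequalities defining Σ(k). -/
def SatisfiesIneqs (k : Fin 4 → ℤ) (p : Fin 12 → ℤ) : Prop :=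
  p 11 ≤ k 0 ∧
  p 10 ≤ k 1 ∧
  p 8 ≤ k 2 ∧
  p 3 ≤ k 3 ∧
  p 6 + p 10 + p 11 ≤ k 0 + k 1 ∧
  p 6 + p 7 + p 8 + p 9 + p 11 ≤ k 0 + k 1 + k 2 ∧
  p 6 + p 8 + p 9 + p 10 + p 11 ≤ k 0 + k 1 + k 2 ∧
  p 8 + p 9 + p 10 ≤ k 1 + k 2 ∧
  p 3 + p 4 + p 5 + p 6 + p 11 ≤ k 0 + k 1 + k 3 ∧
  p 3 + p 4 + p 6 + p 10 + p 11 ≤ k 0 + k 1 + k 3 ∧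
  p 3 + p 4 + p 10 ≤ k 1 + k 3 ∧
  p 1 + p 3 + p 4 + p 8 + p 9 ≤ k 1 + k 2 + k 3 ∧
  p 3 + p 4 + p 8 + p 9 + p 10 ≤ k 1 + k 2 + k 3 ∧
  p 2 + p 3 + p 4 + p 5 + p 6 + p 8 + p 11 ≤ k 0 + k 1 + k 2 + k 3 ∧
  p 1 + p 2 + p 3 + p 4 + p 6 + p 8 + p 11 ≤ k 0 + k 1 + k 2 + k 3 ∧
  p 1 + p 2 + p 3 + p 6 + p 7 + p 8 + p 11 ≤ k 0 + k 1 + k 2 + k 3 ∧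
  p 1 + p 3 + p 6 + p 7 + p 8 + p 9 + p 11 ≤ k 0 + k 1 + k 2 + k 3 ∧
  p 3 + p 4 + p 6 + p 8 + p 9 + p 10 + p 11 ≤ k 0 + k 1 + k 2 + k 3 ∧
  p 1 + p 3 + p 4 + p 6 + p 8 + p 9 + p 11 ≤ k 0 + k 1 + k 2 + k 3 ∧
  p 0 + p 2 + p 3 + p 4 + p 5 + p 6 + p 7 + p 8 + p 10 ≤ k 0 + 2 * k 1 + k 2 + k 3 ∧
  p 0 + p 1 + p 2 + p 3 + p 4 + p 6 + p 7 + p 8 + p 10 ≤ k 0 + 2 * k 1 + k 2 + k 3 ∧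
  p 2 + p 3 + p 4 + p 5 + p 6 + p 7 + p 8 + p 10 + p 11 ≤ k 0 + 2 * k 1 + k 2 + k 3 ∧
  p 1 + p 2 + p 3 + p 4 + p 6 + p 7 + p 8 + p 10 + p 11 ≤ k 0 + 2 * k 1 + k 2 + k 3 ∧
  p 0 + p 1 + p 3 + p 4 + p 6 + p 7 + p 8 + p 9 + p 10 ≤ k 0 + 2 * k 1 + k 2 + k 3 ∧
  p 1 + p 3 + p 4 + p 6 + p 7 + p 8 + p 9 + p 10 + p 11 ≤ k 0 + 2 * k 1 + k 2 + k 3 ∧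
  p 0 + p 3 + p 4 + p 5 + p 6 + p 7 + p 8 + p 9 + p 10 ≤ k 0 + 2 * k 1 + k 2 + k 3 ∧
  p 3 + p 4 + p 5 + p 6 + p 7 + p 8 + p 9 + p 10 + p 11 ≤ k 0 + 2 * k 1 + k 2 + k 3 ∧
  p 1 + p 2 + p 3 + p 4 + p 6 + p 7 + 2 * p 8 + p 9 + p 10 + p 11 ≤ k 0 + 2 * k 1 + 2 * k 2 + k 3 ∧
  p 2 + p 3 + p 4 + p 5 + p 6 + p 7 + 2 * p 8 + p 9 + p 10 + p 11 ≤ k 0 + 2 * k 1 + 2 * k 2 + k 3 ∧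
  p 0 + p 1 + p 2 + p 3 + p 4 + p 6 + p 7 + 2 * p 8 + p 9 + p 10 ≤ k 0 + 2 * k 1 + 2 * k 2 + k 3 ∧
  p 0 + p 2 + p 3 + p 4 + p 5 + p 6 + p 7 + 2 * p 8 + p 9 + p 10 ≤ k 0 + 2 * k 1 + 2 * k 2 + k 3 ∧
  p 1 + p 3 + p 4 + p 6 + p 7 + 2 * p 8 + 2 * p 9 + p 10 + p 11 ≤ k 0 + 2 * k 1 + 2 * k 2 + k 3 ∧
  p 1 + p 2 + 2 * p 3 + p 4 + p 5 + p 6 + p 7 + p 8 + p 10 + p 11 ≤ k 0 + 2 * k 1 + k 2 + 2 * k 3 ∧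
  p 1 + 2 * p 3 + p 4 + p 5 + p 6 + p 7 + p 8 + p 9 + p 10 + p 11 ≤ k 0 + 2 * k 1 + k 2 + 2 * k 3 ∧
  p 0 + p 1 + p 2 + 2 * p 3 + p 4 + p 5 + p 6 + p 7 + p 8 + p 10 ≤ k 0 + 2 * k 1 + k 2 + 2 * k 3 ∧
  p 0 + p 1 + 2 * p 3 + p 4 + p 5 + p 6 + p 7 + p 8 + p 9 + p 10 ≤ k 0 + 2 * k 1 + k 2 + 2 * k 3 ∧
  p 1 + p 2 + 2 * p 3 + 2 * p 4 + p 5 + p 6 + p 8 + p 10 + p 11 ≤ k 0 + 2 * k 1 + k 2 + 2 * k 3 ∧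
  p 1 + 2 * p 3 + 2 * p 4 + p 5 + p 6 + p 8 + p 9 + p 10 + p 11 ≤ k 0 + 2 * k 1 + k 2 + 2 * k 3 ∧
  p 2 + p 3 + p 4 + p 5 + 2 * p 6 + p 7 + p 8 + p 10 + 2 * p 11 ≤ 2 * k 0 + 2 * k 1 + k 2 + k 3 ∧
  p 3 + p 4 + p 5 + 2 * p 6 + p 7 + p 8 + p 9 + p 10 + 2 * p 11 ≤ 2 * k 0 + 2 * k 1 + k 2 + k 3 ∧
  p 1 + p 2 + p 3 + p 4 + 2 * p 6 + p 7 + p 8 + p 10 + 2 * p 11 ≤ 2 * k 0 + 2 * k 1 + k 2 + k 3 ∧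
  p 1 + p 3 + p 4 + 2 * p 6 + p 7 + p 8 + p 9 + p 10 + 2 * p 11 ≤ 2 * k 0 + 2 * k 1 + k 2 + k 3 ∧
  p 0 + p 1 + p 2 + 2 * p 3 + p 4 + p 5 + p 6 + p 7 + 2 * p 8 + p 9 + p 10 ≤ k 0 + 2 * k 1 + 2 * k 2 + 2 * k 3 ∧
  p 1 + p 2 + 2 * p 3 + p 4 + p 5 + p 6 + p 7 + 2 * p 8 + p 9 + p 10 + p 11 ≤ k 0 + 2 * k 1 + 2 * k 2 + 2 * k 3 ∧
  p 1 + p 2 + 2 * p 3 + 2 * p 4 + p 5 + p 6 + 2 * p 8 + p 9 + p 10 + p 11 ≤ k 0 + 2 * k 1 + 2 * k 2 + 2 * k 3 ∧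
  p 1 + p 2 + 2 * p 3 + p 4 + p 5 + 2 * p 6 + p 7 + p 8 + p 10 + 2 * p 11 ≤ 2 * k 0 + 2 * k 1 + k 2 + 2 * k 3 ∧
  p 1 + 2 * p 3 + p 4 + p 5 + 2 * p 6 + p 7 + p 8 + p 9 + p 10 + 2 * p 11 ≤ 2 * k 0 + 2 * k 1 + k 2 + 2 * k 3 ∧
  p 1 + p 2 + 2 * p 3 + 2 * p 4 + p 5 + 2 * p 6 + p 8 + p 10 + 2 * p 11 ≤ 2 * k 0 + 2 * k 1 + k 2 + 2 * k 3 ∧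
  p 1 + 2 * p 3 + 2 * p 4 + p 5 + 2 * p 6 + p 8 + p 9 + p 10 + 2 * p 11 ≤ 2 * k 0 + 2 * k 1 + k 2 + 2 * k 3 ∧
  p 1 + p 2 + p 3 + p 4 + 2 * p 6 + p 7 + 2 * p 8 + p 9 + p 10 + 2 * p 11 ≤ 2 * k 0 + 2 * k 1 + 2 * k 2 + k 3 ∧
  p 2 + p 3 + p 4 + p 5 + 2 * p 6 + p 7 + 2 * p 8 + p 9 + p 10 + 2 * p 11 ≤ 2 * k 0 + 2 * k 1 + 2 * k 2 + k 3 ∧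
  p 1 + p 3 + p 4 + 2 * p 6 + p 7 + 2 * p 8 + 2 * p 9 + p 10 + 2 * p 11 ≤ 2 * k 0 + 2 * k 1 + 2 * k 2 + k 3 ∧
  p 1 + p 2 + 2 * p 3 + p 4 + p 5 + 2 * p 6 + p 7 + 2 * p 8 + p 9 + p 10 + 2 * p 11 ≤ 2 * k 0 + 2 * k 1 + 2 * k 2 + 2 * k 3 ∧
  p 1 + p 2 + 2 * p 3 + 2 * p 4 + p 5 + 2 * p 6 + 2 * p 8 + p 9 + p 10 + 2 * p 11 ≤ 2 * k 0 + 2 * k 1 + 2 * k 2 + 2 * k 3 ∧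
  p 1 + p 2 + 2 * p 3 + 2 * p 4 + p 5 + p 6 + p 7 + p 8 + 2 * p 10 + p 11 ≤ k 0 + 3 * k 1 + k 2 + 2 * k 3 ∧
  p 1 + 2 * p 3 + 2 * p 4 + p 5 + p 6 + p 7 + p 8 + p 9 + 2 * p 10 + p 11 ≤ k 0 + 3 * k 1 + k 2 + 2 * k 3 ∧
  p 0 + p 1 + p 2 + 2 * p 3 + 2 * p 4 + p 5 + p 6 + p 7 + p 8 + 2 * p 10 ≤ k 0 + 3 * k 1 + k 2 + 2 * k 3 ∧
  p 0 + p 1 + 2 * p 3 + 2 * p 4 + p 5 + p 6 + p 7 + p 8 + p 9 + 2 * p 10 ≤ k 0 + 3 * k 1 + k 2 + 2 * k 3 ∧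
  p 0 + p 1 + 2 * p 3 + 2 * p 4 + p 5 + p 6 + p 7 + 2 * p 8 + 2 * p 9 + 2 * p 10 ≤ k 0 + 3 * k 1 + 2 * k 2 + 2 * k 3 ∧
  p 1 + 2 * p 3 + 2 * p 4 + p 5 + p 6 + p 7 + 2 * p 8 + 2 * p 9 + 2 * p 10 + p 11 ≤ k 0 + 3 * k 1 + 2 * k 2 + 2 * k 3 ∧
  p 0 + p 1 + 2 * p 3 + 2 * p 4 + p 5 + 2 * p 6 + p 7 + p 8 + p 9 + 2 * p 10 + p 11 ≤ 2 * k 0 + 3 * k 1 + k 2 + 2 * k 3 ∧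
  p 0 + p 1 + p 2 + 2 * p 3 + 2 * p 4 + p 5 + 2 * p 6 + p 7 + p 8 + 2 * p 10 + p 11 ≤ 2 * k 0 + 3 * k 1 + k 2 + 2 * k 3 ∧
  p 0 + p 1 + 2 * p 3 + 2 * p 4 + p 5 + 2 * p 6 + p 7 + 2 * p 8 + 2 * p 9 + 2 * p 10 + p 11 ≤ 2 * k 0 + 3 * k 1 + 2 * k 2 + 2 * k 3 ∧
  p 1 + p 2 + 2 * p 3 + 2 * p 4 + p 5 + p 6 + p 7 + 3 * p 8 + 2 * p 9 + 2 * p 10 + p 11 ≤ k 0 + 3 * k 1 + 3 * k 2 + 2 * k 3 ∧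
  p 0 + p 1 + p 2 + 2 * p 3 + 2 * p 4 + p 5 + p 6 + p 7 + 3 * p 8 + 2 * p 9 + 2 * p 10 ≤ k 0 + 3 * k 1 + 3 * k 2 + 2 * k 3 ∧
  p 1 + p 2 + 2 * p 3 + 2 * p 4 + p 5 + 3 * p 6 + p 7 + p 8 + 2 * p 10 + 3 * p 11 ≤ 3 * k 0 + 3 * k 1 + k 2 + 2 * k 3 ∧
  p 1 + 2 * p 3 + 2 * p 4 + p 5 + 3 * p 6 + p 7 + p 8 + p 9 + 2 * p 10 + 3 * p 11 ≤ 3 * k 0 + 3 * k 1 + k 2 + 2 * k 3 ∧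
  p 1 + p 2 + 2 * p 3 + 2 * p 4 + p 5 + 3 * p 6 + p 7 + 3 * p 8 + 2 * p 9 + 2 * p 10 + 3 * p 11 ≤ 3 * k 0 + 3 * k 1 + 3 * k 2 + 2 * k 3 ∧
  p 0 + p 1 + p 2 + 2 * p 3 + 2 * p 4 + p 5 + 2 * p 6 + p 7 + 3 * p 8 + 2 * p 9 + 2 * p 10 + p 11 ≤ 2 * k 0 + 3 * k 1 + 3 * k 2 + 2 * k 3 ∧
  p 1 + 2 * p 3 + 2 * p 4 + p 5 + 3 * p 6 + p 7 + 2 * p 8 + 2 * p 9 + 2 * p 10 + 3 * p 11 ≤ 3 * k 0 + 3 * k 1 + 2 * k 2 + 2 * k 3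

/-- Σ(k): the set of 12-tuples of nonnegative integers satisfying the 70 inequalities. -/
def SigmaSet (k : Fin 4 → ℤ) : Set (Fin 12 → ℤ) :=
  {p | (∀ j, 0 ≤ p j) ∧ SatisfiesIneqs k p}


/-! ## Strategy

`C = {(p,k) : p ∈ Σ(k), k ≥ 0}` is the set of lattice points of a cone cut out by explicit linear
forms.  We show that from each point of `C` with `k ≠ 0` one can subtract a point of `Σ(ω_i)` and
stay in `C`.  The choice of that point is a decision tree whose tests compare linear forms with
constants; linear consequences of the tests are recorded as certificates and checked in the kernel. -/

namespace D4Cone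

/-- Pairing of a coefficient list with a point. -/
def dot : List ℤ → (ℕ → ℤ) → ℤ
  | [], _ => 0
  | a :: v, x => a * x 0 + dot v (fun n => x (n + 1))

def vadd : List ℤ → List ℤ → List ℤ
  | [], v => v
  | u, [] => u
  | a :: u, b :: v => (a + b) :: vadd u v

def smul (c : ℤ) (v : List ℤ) : List ℤ := v.map (c * ·)

theorem dot_vadd (u v : List ℤ) (x : ℕ → ℤ) : dot (vadd u v) x = dot u x + dot v x := by
  induction u generalizing v x with
  | nil => simp [vadd, dot]
  | cons a u ih =>
    cases v with
    | nil => simp [vadd, dot]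
    | cons b v => simp only [vadd, dot, ih]; ring

theorem dot_smul (c : ℤ) (v : List ℤ) (x : ℕ → ℤ) : dot (smul c v) x = c * dot v x := by
  unfold smul
  induction v generalizing x with
  | nil => simp [dot]
  | cons a v ih => simp only [List.map_cons, dot, ih]; ring

theorem dot_add (v : List ℤ) (x y : ℕ → ℤ) :
    dot v (fun n => x n + y n) = dot v x + dot v y := by
  induction v generalizing x y with
  | nil => simp [dot]
  | cons a v ih => simp only [dot, ih (fun n => x (n + 1)) (fun n => y (n + 1))]; ring

theorem dot_zero (v : List ℤ) : dot v (fun _ => 0) = 0 := by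
  induction v with
  | nil => rfl
  | cons a v ih => simp only [dot, ih]; ring

/-- The unit vector at position `t`. -/
def unit (t : ℕ) (n : ℕ) : ℤ := if n = t then 1 else 0

theorem dot_unit (v : List ℤ) (t : ℕ) : dot v (unit t) = v.getD t 0 := by
  induction v generalizing t with
  | nil => simp [dot]
  | cons a v ih =>
    cases t with
    | zero =>
      have h : (fun n => unit 0 (n + 1)) = fun _ => 0 := by funext n; simp [unit]
      simp only [dot, h, dot_zero]; simp [unit]
    | succ t =>
      have h : (fun n => unit (t + 1) (n + 1)) = unit t := by funext n; simp [unit]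
      simp only [dot, h, ih]; simp [unit]

/-- The point with a unit at each listed position (with multiplicity). -/
def pt : List ℕ → ℕ → ℤ
  | [], _ => 0
  | t :: L, n => unit t n + pt L n

def val (v : List ℤ) : List ℕ → ℤ
  | [] => 0
  | t :: L => v.getD t 0 + val v L

theorem dot_pt (v : List ℤ) (L : List ℕ) : dot v (pt L) = val v L := by
  induction L with
  | nil => exact dot_zero v
  | cons t L ih =>
    have h : pt (t :: L) = fun n => unit t n + pt L n := rfl
    rw [h, dot_add, ih, dot_unit]; rfl

/-- Decode a coefficient vector from decimal digits (lowest digit first); with `neg` the first twelve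
coefficients are negated. -/
def dec (neg : Bool) : ℕ → ℕ → List ℤ
  | 0, _ => []
  | f + 1, n => (bif neg && Nat.ble 4 f then Int.negOfNat (n % 10) else Int.ofNat (n % 10)) ::
      dec neg f (n / 10)

/-- The 70 slacks. -/
def slacks : List ℕ := [
  1100000000000, 10010000000000, 100000100000000, 1000000000001000, 11110001000000,
  111101111000000, 111111101000000, 110011100000000, 1011100001111000, 1011110001011000,
  1010010000011000, 1110001100011010, 1110011100011000, 1111100101111100, 1111100101011110,
  1111100111001110, 1111101111001010, 1111111101011000, 1111101101011010, 1121010111111101,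
  1121010111011111, 1121110111111100, 1121110111011110, 1121011111011011, 1121111111011010,
  1121011111111001, 1121111111111000, 1221111211011110, 1221111211111100, 1221011211011111,
  1221011211111101, 1221112211011010, 2121110111112110, 2121111111112010, 2121010111112111,
  2121011111112011, 2121110101122110, 2121111101122010, 1122210112111100, 1122211112111000,
  1122210112011110, 1122211112011010, 2221011211112111, 2221111211112110, 2221111201122110,
  2122210112112110, 2122211112112010, 2122210102122110, 2122211102122010, 1222211212011110,
  1222211212111100, 1222212212011010, 2222211212112110, 2222211202122110, 2131120111122110,
  2131121111122010, 2131020111122111, 2131021111122011, 2231022211122011, 2231122211122010,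
  2132121112122011, 2132120112122111, 2232122212122011, 2331122311122110, 2331022311122111,
  2133320113122110, 2133321113122010, 2333322313122110, 2332122312122111, 2233322213122010]

/-- The 12 coordinates `p`, the 4 coordinates `k`, the sum of `k`. -/
def coords : List ℕ := [
  1, 10, 100, 1000, 10000, 100000, 1000000, 10000000, 100000000, 1000000000, 10000000000,
  100000000000, 1000000000000, 10000000000000, 100000000000000, 1000000000000000, 1111000000000000]

/-- All the linear forms. -/
def FM : List (List ℤ) := slacks.map (dec true 16) ++ coords.map (dec false 16)

def nth : List (List ℤ) → ℕ → List ℤ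
  | [], _ => []
  | v :: _, 0 => v
  | _ :: V, n + 1 => nth V n

theorem nth_eq (V : List (List ℤ)) (n : ℕ) : nth V n = V.getD n [] := by
  induction V generalizing n with
  | nil => simp [nth]
  | cons v V ih => cases n <;> simp [nth, ih]

def form (t : ℕ) : List ℤ :=
  bif Nat.ble 100 t then smul (-1) (nth FM (t - 100)) else nth FM t

theorem form_lt {t : ℕ} (h : t < 100) : form t = nth FM t := by
  have h1 : Nat.ble 100 t = false := by
    rw [Bool.eq_false_iff]; intro h2; have := Nat.le_of_ble_eq_true h2; omega
  simp [form, h1]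

theorem form_ge (t : ℕ) : form (100 + t) = smul (-1) (nth FM t) := by
  have h1 : Nat.ble 100 (100 + t) = true := Nat.ble_eq_true_of_le (by omega)
  simp [form, h1]

/-- Known lower bounds of forms. -/
abbrev Bds := List (ℕ × ℤ)

def look (bs : Bds) (t : ℕ) : Option ℤ :=
  match bs with
  | [] => if t < 100 then some 0 else none
  | (i, c) :: bs => bif Nat.beq i t then some c else look bs t

def comb (bs : Bds) : List ℕ → Option (List ℤ × ℤ)
  | [] => some ([], 0)
  | t :: ts =>
    match comb bs ts, look bs t with
    | some (v, b), some c => some (vadd (form t) v, c + b)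
    | _, _ => none

def derOk (bs : Bds) (j D c : ℕ) (ts : List ℕ) : Bool :=
  match comb bs ts with
  | some (v, b) => decide (0 < D) && decide (j < 100) && decide (v = smul D (nth FM j)) &&
      decide ((D : ℤ) * c ≤ b)
  | none => false

def run : List (List ℕ) → Bds → (Bds → Bool) → Bool
  | [], bs, f => f bs
  | [] :: _, _, _ => false
  | (h :: ts) :: ds, bs, f =>
    derOk bs (h % 100) (h / 100 % 10) (h / 1000) ts &&
      run ds ((h % 100, ((h / 1000 : ℕ) : ℤ)) :: bs) f

inductive Tree where
  | leaf (i : ℕ) (L : List ℕ) : Tree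
  | split (j : ℕ) (c : ℤ) (a b : Tree) : Tree
  | der (ds : List (List ℕ)) (t : Tree) : Tree

def leafOk (bs : Bds) (g : List ℕ) : ℕ → List (List ℤ) → Bool
  | _, [] => true
  | j, v :: V =>
    (match look bs j with
      | some b => decide (0 ≤ val v g) && decide (val v g ≤ b)
      | none => false) && leafOk bs g (j + 1) V

def check : Tree → Bds → Bool
  | .leaf i L, bs =>
    decide (i < 4) && L.all (fun t => decide (t < 12)) && leafOk bs ((12 + i) :: L) 0 FM
  | .split j c a b, bs => decide (j < 100) && check a ((j, c) :: bs) && check b ((100 + j, 1 - c) :: bs)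
  | .der ds t, bs => run ds bs (check t)

/-- The cone. -/
def C (x : ℕ → ℤ) : Prop := ∀ v ∈ FM, 0 ≤ dot v x

def Good (bs : Bds) (x : ℕ → ℤ) : Prop := ∀ q ∈ bs, q.2 ≤ dot (form q.1) x

theorem C.getD {x : ℕ → ℤ} (hx : C x) (t : ℕ) : 0 ≤ dot (nth FM t) x := by
  rw [nth_eq]
  by_cases h : t < FM.length
  · rw [List.getD_eq_getElem _ _ h]; exact hx _ (List.getElem_mem h)
  · rw [List.getD_eq_default _ _ (by omega)]; simp [dot]

theorem look_sound {x : ℕ → ℤ} (hx : C x) {bs : Bds} (hb : Good bs x) {t : ℕ} {c : ℤ}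
    (h : look bs t = some c) : c ≤ dot (form t) x := by
  induction bs with
  | nil =>
    simp only [look] at h
    split_ifs at h with h1
    simp only [Option.some.injEq] at h
    subst h
    rw [form_lt h1]
    exact hx.getD t
  | cons q bs ih =>
    obtain ⟨i, a⟩ := q
    simp only [look] at h
    cases h1 : Nat.beq i t with
    | true =>
      rw [h1] at h
      simp only [cond_true, Option.some.injEq] at h
      have h2 := Nat.eq_of_beq_eq_true h1
      subst h; subst h2
      exact hb (i, a) (by simp)
    | false =>
      rw [h1] at h
      exact ih (fun r hr => hb r (by simp [hr])) h

theorem comb_sound {x : ℕ → ℤ} (hx : C x) {bs : Bds} (hb : Good bs x) (ts : List ℕ) {v : List ℤ}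
    {b : ℤ} (h : comb bs ts = some (v, b)) : b ≤ dot v x := by
  induction ts generalizing v b with
  | nil =>
    simp only [comb, Option.some.injEq, Prod.mk.injEq] at h
    obtain ⟨rfl, rfl⟩ := h
    simp [dot]
  | cons t ts ih =>
    simp only [comb] at h
    split at h
    · rename_i v' b' c h1 h2
      simp only [Option.some.injEq, Prod.mk.injEq] at h
      obtain ⟨rfl, rfl⟩ := h
      rw [dot_vadd]
      exact add_le_add (look_sound hx hb h2) (ih h1)
    · simp at h

theorem derOk_sound {x : ℕ → ℤ} (hx : C x) {bs : Bds} (hb : Good bs x) {j D c : ℕ} {ts : List ℕ}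
    (h : derOk bs j D c ts = true) : (c : ℤ) ≤ dot (form j) x := by
  unfold derOk at h
  split at h
  · rename_i v b h1
    simp only [Bool.and_eq_true, decide_eq_true_eq] at h
    obtain ⟨⟨⟨h2, h3⟩, h4⟩, h5⟩ := h
    have h6 := comb_sound hx hb ts h1
    rw [h4, dot_smul] at h6
    rw [form_lt h3]
    have h7 : (D : ℤ) * c ≤ D * dot (nth FM j) x := h5.trans h6
    exact le_of_mul_le_mul_left h7 (by exact_mod_cast h2)
  · simp at h

theorem run_sound {x : ℕ → ℤ} (hx : C x) (f : Bds → Bool) (ds : List (List ℕ)) {bs : Bds}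
    (hb : Good bs x) (h : run ds bs f = true) : ∃ bs', Good bs' x ∧ f bs' = true := by
  induction ds generalizing bs with
  | nil => exact ⟨bs, hb, h⟩
  | cons d ds ih =>
    cases d with
    | nil => simp [run] at h
    | cons a ts =>
      simp only [run, Bool.and_eq_true] at h
      refine ih ?_ h.2
      intro q hq
      rcases List.mem_cons.1 hq with rfl | hq
      · exact derOk_sound hx hb h.1
      · exact hb q hq

theorem leafOk_sound {x : ℕ → ℤ} {bs : Bds} (g : List ℕ) (V : List (List ℤ)) (j : ℕ)
    (hl : ∀ i b, i < V.length → look bs (j + i) = some b → b ≤ dot (V.getD i []) x)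
    (h : leafOk bs g j V = true) : ∀ v ∈ V, 0 ≤ val v g ∧ val v g ≤ dot v x := by
  induction V generalizing j with
  | nil => simp
  | cons w V ih =>
    simp only [leafOk, Bool.and_eq_true] at h
    obtain ⟨h1, h2⟩ := h
    intro v hv
    rcases List.mem_cons.1 hv with rfl | hv
    · split at h1
      · rename_i b hb
        simp only [Bool.and_eq_true, decide_eq_true_eq] at h1
        have := hl 0 b (by simp) (by simpa using hb)
        exact ⟨h1.1, h1.2.trans (by simpa using this)⟩
      · simp at h1
    · refine ih (j + 1) ?_ h2 v hv
      intro i b hi hb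
      have := hl (i + 1) b (by simpa using hi) (by rw [← hb]; congr 1; omega)
      simpa using this

theorem check_sound {x : ℕ → ℤ} (hx : C x) (T : Tree) {bs : Bds} (hb : Good bs x)
    (h : check T bs = true) :
    ∃ i L, i < 4 ∧ (∀ t ∈ L, t < 12) ∧
      ∀ v ∈ FM, 0 ≤ val v ((12 + i) :: L) ∧ val v ((12 + i) :: L) ≤ dot v x := by
  induction T generalizing bs with
  | leaf i L =>
    simp only [check, Bool.and_eq_true, decide_eq_true_eq, List.all_eq_true] at h
    refine ⟨i, L, h.1.1, h.1.2, leafOk_sound _ FM 0 ?_ h.2⟩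
    intro t b ht hlk
    have h1 := look_sound hx hb hlk
    have h2 : t < 100 := lt_trans ht (by decide)
    rw [Nat.zero_add, form_lt h2, nth_eq] at h1; exact h1
  | split j c a b iha ihb =>
    simp only [check, Bool.and_eq_true, decide_eq_true_eq] at h
    obtain ⟨⟨hj, h1⟩, h2⟩ := h
    rcases le_or_gt c (dot (nth FM j) x) with hc | hc
    · refine iha ?_ h1
      intro q hq
      rcases List.mem_cons.1 hq with rfl | hq
      · simpa only [form_lt hj] using hc
      · exact hb q hq
    · refine ihb ?_ h2
      intro q hq
      rcases List.mem_cons.1 hq with rfl | hq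
      · simp only [form_ge, dot_smul]
        omega
      · exact hb q hq
  | der ds t ih =>
    simp only [check] at h
    obtain ⟨bs', hb', h'⟩ := run_sound hx _ ds hb h
    exact ih hb' h'

set_option maxHeartbeats 4000000 in
/-- The decision tree. -/
def tree : Tree :=
  .split 78 1 (
  .der [[1184,2,78]] <|
  .leaf 2 [8]) <|
  .split 73 1 (
  .der [[1185,3,73]] <|
  .leaf 3 [3]) <|
  .split 84 1 (
  .der [[1102,84,178]] <|
  .split 72 1 (
  .split 79 1 (
  .leaf 2 [2,9]) <|
  .der [[1106,2,4,179], [1107,1,2,179], [1112,2,10,179], [1116,15,72,179], [1117,2,9,179],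
  [1118,14,72,179], [1123,20,72,179], [1124,22,72,179], [1125,19,72,179], [1126,21,72,179],
  [1127,2,22,179], [1128,2,21,179], [1129,2,20,179], [1130,2,19,179], [2131,2,24,179], [1133,32,72,179],
  [1135,34,72,179], [1137,36,72,179], [1139,38,72,179], [1141,40,72,179], [1142,2,34,179],
  [1143,2,32,179], [1144,2,36,179], [1146,45,72,179], [1148,47,72,179], [1149,2,40,179], [1150,2,38,179],
  [2151,2,41,179], [1152,2,45,179], [1153,2,47,179], [1155,54,72,179], [1157,56,72,179], [2158,2,57,179],
  [2159,2,55,179], [1160,61,72,179], [2162,2,60,179], [1166,65,72,179], [2169,2,66,179], [2163,2,2,54,179,179],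
  [2164,2,2,56,179,179], [2167,2,2,65,179,179], [2168,2,2,61,179,179]] <|
  .split 5 1 (
  .split 11 1 (
  .leaf 2 [2]) <|
  .der [[1113,44,80,111], [1438,5,5,13,13,54,65,111,111], [2450,5,5,13,13,63,67,111,111], [1219,56,64,80,80,111,111],
  [1221,54,63,80,80,111,111], [2128,63,80,111], [2130,64,80,111], [1171,12,80,111]] <|
  .leaf 2 [1]) <|
  .der [[1111,31,80,105], [1113,50,80,105], [1436,11,11,13,13,54,65,105,105], [2444,11,13,13,31,53,63,105,105],
  [1447,13,13,14,41,48,65,105,105], [2253,13,18,67,105], [1114,49,80,105], [1177,6,80,105]]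
  <|
  .leaf 2 [7]) <|
  .der [[1113,2,8,172], [1127,2,24,172], [1128,2,26,172], [1129,2,23,172], [1130,2,25,172],
  [1142,2,35,172], [1143,2,33,172], [1144,2,37,172], [1149,2,41,172], [1150,2,39,172], [1152,2,46,172],
  [1153,2,48,172], [1163,2,59,172], [1164,2,58,172], [1167,2,69,172], [1168,2,62,172]] <|
  .split 79 1 (
  .der [[1114,18,79,172], [1115,16,79,172], [1119,25,79,172], [1120,23,79,172], [1121,26,79,172],
  [1122,24,79,172], [1132,33,79,172], [1134,35,79,172], [1136,37,79,172], [1138,39,79,172],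
  [1140,41,79,172], [1145,46,79,172], [1147,48,79,172], [1154,55,79,172], [1156,57,79,172],
  [1161,60,79,172], [1165,66,79,172]] <|
  .leaf 2 [9]) <|
  .der [[1106,2,4,179], [1107,1,2,179], [1112,2,10,179], [1117,2,9,179], [1131,2,24,179], [1151,2,41,179],
  [1158,2,57,179], [1159,2,55,179], [1162,2,60,179], [2163,2,59,172], [2164,2,58,172], [2168,2,62,172],
  [1169,2,66,179], [2167,2,69,172]] <|
  .split 36 1 (
  .der [[1137,36,72,179], [2144,2,36,179]] <|
  .split 47 1 (
  .der [[1148,47,72,179], [2153,2,48,172]] <|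
  .split 14 1 (
  .der [[1118,14,72,179]] <|
  .split 11 1 (
  .split 77 1 (
  .leaf 2 [7]) <|
  .der [[1105,6,80,177], [1115,14,74,177], [1116,15,72,179], [1121,1,13,177], [1122,1,14,177],
  [1124,1,18,177], [1126,7,8,177], [2227,2,6,11,22,172,177], [2128,2,21,179], [2131,7,18,177],
  [1132,36,74,177], [1133,32,72,179], [1138,4,13,177], [1139,6,8,177], [1140,4,14,177], [1141,4,18,177],
  [2143,2,32,179], [1145,47,74,177], [1146,45,72,179], [2149,2,40,179], [2150,2,38,179], [2151,6,18,177],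
  [2152,2,45,179], [1154,1,36,177], [1155,1,37,177], [2159,7,37,177], [3163,2,59,172], [1165,4,47,177],
  [1166,4,48,177], [3167,6,53,177], [2269,66,67,72,179]] <|
  .split 70 1 (
  .leaf 2 [0]) <|
  .der [[1119,21,81,170], [1120,22,81,170], [1123,20,72,179], [1125,19,72,179], [2129,2,20,179],
  [2130,2,19,179], [1134,32,81,170], [1135,34,72,179], [2142,2,35,172], [1156,54,81,170], [1261,56,65,81,170],
  [1157,56,72,179], [1260,57,66,81,170], [2158,2,57,179], [2262,58,69,81,170], [3164,2,58,172],
  [3268,64,67,81,170]] <|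
  .leaf 2 []) <|
  .der [[1105,31,80,111], [1438,5,5,13,13,54,65,111,111], [1439,5,5,8,8,59,69,111,111], [2450,5,5,13,13,63,67,111,111],
  [1219,56,64,80,80,111,111], [1221,54,63,80,80,111,111], [1125,58,80,111], [1126,59,80,111],
  [2128,63,80,111], [2130,64,80,111], [1171,12,80,111]] <|
  .leaf 2 [1]) <|
  .der [[1105,49,80,114], [1626,5,5,5,8,8,21,36,55,63,114,114,114], [1439,5,5,8,38,53,66,114,114],
  [1119,13,20,114], [1225,19,62,80,114], [1121,13,22,114], [2328,2,5,13,21,63,172,114], [2130,13,29,114],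
  [1138,13,40,114], [2350,2,5,13,38,67,172,114], [1171,13,75,114]] <|
  .leaf 2 [1]) <|
  .der [[1205,8,13,40,51,147,147], [1119,13,61,147], [1225,8,19,62,147], [2230,13,19,68,147],
  [1221,13,13,54,65,147,147], [1426,8,8,21,21,59,69,147,147], [2428,13,13,21,21,63,67,147,147],
  [1138,13,65,147], [1239,8,38,69,147], [2250,13,38,67,147], [1171,9,13,147]] <|
  .leaf 2 [1]) <|
  .der [[1205,8,13,22,31,136,136], [1119,13,56,136], [1225,8,19,58,136], [2230,13,19,64,136],
  [1121,13,54,136], [1226,8,21,59,136], [2228,13,21,63,136], [1238,13,21,65,136], [1339,8,26,38,69,136],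
  [2350,13,28,38,67,136], [1171,10,13,136]] <|
  .leaf 2 [1]) <|
  .split 82 1 (
  .split 0 1 (
  .split 76 1 (
  .leaf 0 [6]) <|
  .der [[1104,0,1,176], [1106,0,7,176], [1109,0,10,176], [1117,0,12,176], [1118,0,11,176],
  [1138,0,21,176], [1139,0,26,176], [1140,0,22,176], [1141,0,24,176], [1145,0,32,176], [1146,0,33,176],
  [1147,0,36,176], [1148,0,37,176], [1149,0,27,176], [1150,0,28,176], [1151,0,31,176], [1152,0,43,176],
  [1153,0,44,176], [1160,0,57,176], [1161,0,56,176], [1162,0,58,176], [1168,0,64,176], [2165,0,0,54,176,176],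
  [2266,0,0,59,65,72,78,184,176,176], [2167,0,0,63,176,176], [2169,67,72,78,184]] <|
  .split 70 1 (
  .split 81 1 (
  .leaf 0 [0,11]) <|
  .der [[1121,19,70,181], [1122,20,70,181], [1124,23,70,181], [1126,25,70,181], [1127,29,70,181],
  [1128,30,70,181], [1132,34,70,181], [1133,35,70,181], [2138,0,21,176], [2139,0,26,176], [2140,0,22,176],
  [2141,0,24,176], [1143,42,70,181], [2145,0,32,176], [2146,0,33,176], [2149,0,27,176], [2150,0,28,176],
  [2152,0,43,176], [1154,56,70,181], [1155,57,70,181], [1159,58,70,181], [1163,64,70,181],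
  [3165,0,0,54,176,176], [3266,0,0,59,65,72,78,184,176,176], [3167,0,0,63,176,176], [3169,67,72,78,184]]
  <|
  .split 44 1 (
  .der [[2153,0,44,176], [1136,44,78,79,184], [2147,0,36,176], [1137,44,72,78,184], [2148,0,37,176]]
  <|
  .split 13 1 (
  .der [[1108,13,72,78,184]] <|
  .split 14 1 (
  .split 77 1 (
  .leaf 0 [7]) <|
  .der [[1105,6,80,177], [1115,14,74,177], [1116,18,74,177], [1131,7,18,177], [2151,0,31,176]]
  <|
  .leaf 0 [0]) <|
  .der [[1231,11,27,51,114], [1105,49,80,114], [1116,15,18,114], [1123,18,20,114], [1225,8,23,30,114],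
  [1257,23,37,56,114], [1258,18,57,64,114], [2260,23,48,61,114], [2262,23,48,68,114], [1135,18,34,114],
  [2151,18,49,114], [1172,18,79,114]] <|
  .leaf 0 [2]) <|
  .der [[1431,5,11,11,50,51,63,113,113], [2251,5,18,67,113], [1105,50,80,113], [1116,52,80,113],
  [1123,18,19,113], [1157,19,37,113], [1158,30,37,113], [2160,19,48,113], [2162,25,53,113]]
  <|
  .split 8 1 (
  .der [[1125,8,30,113], [1135,8,42,113], [1172,2,8,113]] <|
  .leaf 0 [2]) <|
  .der [[1329,20,23,30,53,80,108,108], [1114,47,80,108], [1115,45,80,108], [1120,14,19,113],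
  [1175,14,71,113]] <|
  .leaf 0 [5]) <|
  .der [[1205,28,51,80,144], [1231,11,51,63,144], [2251,18,31,67,144], [1115,14,43,144], [1116,18,43,144],
  [1223,18,18,56,64,144,144]] <|
  .split 14 1 (
  .der [[1220,14,14,56,64,144,144], [1129,14,64,144], [1175,12,14,144]] <|
  .leaf 0 [5]) <|
  .der [[1108,47,80,114], [1225,8,23,30,114], [1135,18,34,114], [1137,18,36,114], [1257,23,37,56,114],
  [1258,23,37,64,114], [2148,18,47,114], [2260,48,58,61,144], [2262,48,58,68,144], [1172,2,37,144]]
  <|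
  .leaf 0 [2]) <|
  .split 44 1 (
  .der [[2153,0,44,176], [1136,44,78,79,184], [2147,0,36,176], [1137,44,72,78,184], [2148,0,37,176]]
  <|
  .split 13 1 (
  .der [[1108,13,72,78,184]] <|
  .split 14 1 (
  .split 77 1 (
  .leaf 0 [7]) <|
  .der [[1105,6,80,177], [1115,14,74,177], [1116,18,74,177], [1121,1,13,177], [1119,21,81,170],
  [1122,1,14,177], [1120,22,81,170], [1124,4,11,177], [1123,24,81,170], [1126,7,8,177], [1125,26,81,170],
  [1127,7,14,177], [1128,7,13,177], [1129,27,81,170], [1130,28,81,170], [1131,6,11,177], [1132,36,74,177],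
  [1133,37,74,177], [1134,32,81,170], [1135,33,81,170], [2138,4,13,177], [2139,6,8,177], [2140,4,14,177],
  [2141,4,18,177], [1143,44,74,177], [1142,43,81,170], [2145,0,32,176], [2146,0,33,176], [2149,0,27,176],
  [2150,0,28,176], [2151,0,31,176], [2152,0,43,176], [1154,1,36,177], [1155,1,37,177], [1156,54,81,170],
  [2361,4,47,56,56,82,176,170,177], [1157,55,81,170], [2360,4,48,57,57,82,176,170,177], [1159,7,37,177],
  [1158,59,81,170], [2362,6,48,58,58,82,176,170,177], [1163,7,44,177], [1164,63,81,170], [2368,6,53,64,64,82,176,170,177],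
  [3165,4,47,177], [3166,4,48,177], [3167,6,53,177], [3169,6,48,177]] <|
  .leaf 0 []) <|
  .der [[1105,49,80,114], [1626,5,5,5,8,8,21,36,55,63,114,114,114], [2439,5,5,8,38,53,66,114,114],
  [1116,15,18,114], [1233,16,32,37,114], [2246,16,45,48,114], [1123,18,20,114], [1225,8,23,30,114],
  [1257,23,37,56,114], [1658,11,11,23,53,57,57,62,64,64,114,114,114], [2260,23,48,61,114],
  [2262,23,48,68,114], [1124,11,40,114], [1255,24,37,54,114], [1659,11,11,51,53,55,55,55,63,63,114,114,114],
  [1131,11,49,114], [1135,18,34,114], [2141,18,40,114], [3266,41,48,65,114], [3269,18,66,67,114],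
  [2151,18,49,114], [1172,18,79,114]] <|
  .leaf 0 [2]) <|
  .der [[1105,50,80,113], [1824,5,5,5,5,11,11,11,22,47,54,54,66,113,113,113,113], [1431,5,5,11,11,63,67,113,113],
  [2441,5,5,18,40,47,66,113,113], [2251,5,18,67,113], [1116,52,80,113], [1123,18,19,113], [1155,21,37,113],
  [1157,19,37,113], [2360,38,48,57,57,82,176,170,113], [1158,25,44,113], [2362,39,53,58,58,82,176,170,113],
  [1159,26,44,113], [3166,38,48,113], [3169,39,53,113]] <|
  .split 8 1 (
  .der [[1125,8,30,113], [1126,8,28,113], [1133,8,43,113], [1135,8,42,113], [2139,8,50,113],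
  [2146,8,52,113], [1172,2,8,113]] <|
  .leaf 0 [2]) <|
  .der [[1227,5,22,44,108], [2249,5,40,53,108], [1329,20,23,30,53,80,108,108], [1114,47,80,108],
  [1115,45,80,108], [1120,14,19,113], [1122,14,21,113], [2140,14,38,113], [1175,14,71,113]]
  <|
  .leaf 0 [5]) <|
  .der [[1105,18,28,144], [1116,18,43,144], [1223,11,18,61,64,144,144], [1224,11,11,54,67,144,144],
  [2441,18,18,24,24,65,67,144,144], [1231,11,11,63,67,144,144], [2251,18,31,67,144]] <|
  .split 14 1 (
  .der [[1115,14,43,144], [1220,14,14,56,64,144,144], [1222,14,14,54,63,144,144], [2440,14,14,22,22,65,67,144,144],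
  [1127,14,63,144], [2249,14,27,67,144], [1129,14,64,144], [1175,12,14,144]] <|
  .leaf 0 [5]) <|
  .der [[1108,47,80,114], [1225,8,23,30,114], [1426,5,8,8,21,24,63,114,114], [2439,5,5,8,8,65,67,114,114],
  [1233,11,16,32,47,114,114], [1135,18,34,114], [1137,11,47,114], [1255,24,37,54,114], [1359,31,37,55,63,114],
  [1257,23,37,56,114], [1258,18,57,64,114], [2560,37,41,57,57,57,65,82,82,176,176,170,170,114],
  [2262,18,60,68,114], [2146,33,53,144], [2148,18,47,114], [3266,41,48,65,114], [3369,48,51,66,67,114],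
  [1172,2,37,144]] <|
  .leaf 0 [2]) <|
  .der [[1181,82,100]] <|
  .split 70 1 (
  .leaf 0 [0,11]) <|
  .der [[1119,21,81,170], [1120,22,81,170], [1123,24,81,170], [1125,26,81,170], [1129,27,81,170],
  [1130,28,81,170], [1134,32,81,170], [1135,33,81,170], [1142,43,81,170], [1156,54,81,170],
  [1261,56,65,81,170], [1157,55,81,170], [1260,57,66,81,170], [1158,59,81,170], [1262,58,69,81,170],
  [1164,63,81,170], [1268,64,67,81,170]] <|
  .leaf 0 [11]) <|
  .split 85 1 (
  .der [[1103,85,173]] <|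
  .split 17 1 (
  .der [[1109,17,78,79,184], [1110,9,76,81,182], [1112,17,76,81,182]] <|
  .split 71 1 (
  .split 75 1 (
  .leaf 3 [1,5]) <|
  .der [[1108,9,80,175], [1113,14,71,175], [1119,20,71,175], [1121,22,71,175], [1125,23,71,175],
  [1126,5,10,175], [1128,27,71,175], [1130,29,71,175], [1132,10,15,175], [1133,10,16,175],
  [1134,3,20,175], [1135,3,23,175], [1136,10,14,175], [1137,9,11,175], [1138,40,71,175], [1139,5,9,175],
  [1142,3,29,175], [1143,3,27,175], [1144,12,14,175], [1145,3,40,175], [1146,9,16,175], [1147,9,14,175],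
  [1148,9,18,175], [1150,49,71,175], [1152,15,17,175], [1153,14,17,175], [1154,10,22,175],
  [1155,10,24,175], [1259,12,31,55,175], [1156,10,20,175], [1157,10,23,175], [1158,12,23,175],
  [1160,9,23,175], [1161,9,20,175], [1162,17,23,175], [1163,12,27,175], [1164,12,29,175], [1165,9,40,175],
  [1166,9,41,175], [1269,17,51,66,175], [1167,17,49,175], [1168,17,29,175]] <|
  .leaf 3 [1]) <|
  .der [[1111,12,80,171], [1116,3,5,171], [1118,17,80,171], [1124,5,10,171], [1131,5,12,171],
  [1132,3,21,171], [1133,3,26,171], [1134,3,19,171], [1135,3,25,171], [1136,10,13,171], [1137,8,12,171],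
  [1141,5,9,171], [1142,3,30,171], [1143,3,28,171], [1144,12,13,171], [1145,3,38,171], [1146,3,39,171],
  [1147,9,13,171], [1148,8,17,171], [1151,5,17,171], [1152,3,50,171], [1153,13,17,171], [1154,10,21,171],
  [1155,10,26,171], [1156,10,19,171], [1157,10,25,171], [1158,12,25,171], [1159,12,26,171],
  [1160,9,25,171], [1161,9,19,171], [1162,17,25,171], [1163,12,28,171], [1164,12,30,171], [1165,9,38,171],
  [1166,9,39,171], [1167,17,50,171], [1168,17,30,171], [1169,17,39,171]] <|
  .split 15 1 (
  .split 74 1 (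
  .leaf 3 [4]) <|
  .der [[1114,15,77,174], [1122,1,15,174], [1127,7,15,174], [1140,4,15,174], [1149,6,15,174]]
  <|
  .split 75 1 (
  .der [[1120,19,75,171], [1123,25,75,171], [1129,30,75,171]] <|
  .leaf 3 [5]) <|
  .der [[1108,9,80,175], [1113,14,71,175], [1121,22,71,175], [1126,5,10,175], [1128,27,71,175],
  [2132,3,21,171], [2133,3,26,171], [2136,10,14,175], [2237,8,10,11,17,171,175], [1138,40,71,175],
  [1139,5,9,175], [2143,12,15,175], [2144,12,13,171], [2145,3,38,171], [2146,9,16,175], [2147,9,13,171],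
  [2148,9,18,175], [1150,49,71,175], [2152,3,50,171], [2153,13,17,171], [2154,10,22,175], [2155,10,26,171],
  [2259,12,31,55,175], [2163,12,28,171], [2165,9,40,175], [2166,4,46,174], [2269,17,51,66,175],
  [2167,17,49,175]] <|
  .split 70 1 (
  .leaf 3 [0]) <|
  .der [[1119,21,81,170], [1120,19,75,171], [1123,24,81,170], [1125,23,71,175], [1129,27,81,170],
  [1130,29,71,175], [2134,3,19,171], [2135,3,25,171], [2142,3,30,171], [2156,1,34,174], [2261,56,65,81,170],
  [2157,1,35,174], [2260,57,66,81,170], [2158,7,35,174], [2262,58,69,81,170], [2164,12,30,171],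
  [2268,64,67,81,170]] <|
  .leaf 3 []) <|
  .der [[1108,45,80,115], [1123,16,20,115], [1125,16,19,115], [1126,16,21,115], [2133,16,32,115],
  [2237,18,33,36,115], [2255,24,33,54,115], [2359,31,33,55,63,115], [2257,23,34,55,115], [2258,31,42,57,115],
  [2135,16,34,115], [2260,23,35,65,115], [2362,35,51,60,68,115], [1139,5,45,115], [2146,16,45,115],
  [2248,18,46,47,115], [2266,41,46,65,115], [2369,46,51,66,67,115], [1172,16,79,115]] <|
  .leaf 3 [2]) <|
  .der [[1115,3,49,117], [1116,3,51,117], [1232,3,3,54,67,117,117], [1233,3,3,59,69,117,117],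
  [1234,3,3,61,68,117,117], [1135,3,62,117], [1142,3,68,117], [1243,3,3,63,67,117,117], [1245,3,3,65,67,117,117],
  [1146,3,69,117], [1152,3,67,117], [1174,3,6,117]] <|
  .leaf 3 [4]) <|
  .der [[1183,86,184,182,185]] <|
  .split 74 1 (
  .der [[1101,10,73,74,185], [1104,9,73,74,185], [1106,17,73,74,185], [1107,12,73,74,185]]
  <|
  .split 77 1 (
  .leaf 1 [4,7]) <|
  .der [[1105,6,80,177], [1115,14,74,177], [1116,18,74,177], [1121,1,13,177], [1122,1,14,177],
  [1124,4,11,177], [1126,7,8,177], [1127,7,14,177], [1128,7,13,177], [1131,6,11,177], [1132,36,74,177],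
  [1133,37,74,177], [1138,4,13,177], [1139,6,8,177], [1140,4,14,177], [1141,4,18,177], [1143,44,74,177],
  [1145,47,74,177], [1146,48,74,177], [1149,6,14,177], [1150,6,13,177], [1151,6,18,177], [1152,53,74,177],
  [1154,1,36,177], [1155,1,37,177], [1159,7,37,177], [1163,7,44,177], [1165,4,47,177], [1166,4,48,177],
  [1167,6,53,177], [1169,6,48,177]] <|
  .split 70 1 (
  .leaf 1 [0,4]) <|
  .der [[1119,21,81,170], [1120,22,81,170], [1123,24,81,170], [1125,26,81,170], [1129,27,81,170],
  [1130,28,81,170], [1134,32,81,170], [1135,33,81,170], [1142,43,81,170], [1156,54,81,170],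
  [1261,56,65,81,170], [1157,55,81,170], [1260,57,66,81,170], [1158,59,81,170], [1262,58,69,81,170],
  [1164,63,81,170], [1268,64,67,81,170]] <|
  .leaf 1 [4]) <|
  .split 77 1 (
  .der [[1114,15,77,174], [1118,16,77,174], [1136,32,77,174], [1137,33,77,174], [1144,43,77,174],
  [1147,45,77,174], [1148,46,77,174], [1153,52,77,174], [1111,18,76,81,182]] <|
  .split 13 1 (
  .der [[1108,13,72,78,184]] <|
  .split 80 1 (
  .leaf 1 [7,10]) <|
  .der [[1101,83,180], [1106,5,77,180], [1109,8,75,180], [1110,1,3,174], [1112,11,71,180],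
  [1117,3,6,174], [1122,1,15,174], [1124,1,16,174], [1131,5,11,180], [2137,8,11,180], [1139,5,8,180],
  [2144,11,13,180], [1145,8,15,180], [1146,8,16,180], [2147,8,14,180], [2148,8,18,180], [1149,5,14,180],
  [1150,5,13,180], [1151,5,18,180], [2269,39,48,51,180], [1152,13,16,180], [2153,13,18,180],
  [2267,50,51,53,180], [1156,1,34,174], [1157,1,35,174], [1158,11,25,180], [1160,8,23,180],
  [1361,19,20,47,60,78,79,184,180], [1162,18,25,180], [1164,11,30,180], [1168,6,42,174], [1104,9,73,74,185],
  [1140,4,15,174], [1241,40,51,72,78,184], [2165,4,45,174], [2266,65,69,72,78,184], [1107,12,73,74,185],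
  [1127,7,15,174], [1126,39,76,81,182], [2159,11,26,180], [1128,50,76,81,182], [2163,11,28,180],
  [1121,28,78,79,184], [1132,45,76,81,182], [2136,32,77,174], [2154,1,32,174], [2255,54,59,72,78,184],
  [1133,46,76,81,182], [1138,45,71,73,185], [1143,52,76,81,182]] <|
  .split 70 1 (
  .leaf 1 [0,7]) <|
  .der [[1119,21,81,170], [1120,22,81,170], [1123,24,81,170], [1125,26,81,170], [1129,27,81,170],
  [1130,28,81,170], [1134,32,81,170], [1135,33,81,170], [1142,43,81,170], [2156,1,34,174],
  [2261,56,65,81,170], [2360,23,25,48,61,72,78,184,180], [2157,1,35,174], [2158,7,35,174],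
  [2262,58,69,81,170], [2164,7,42,174], [2268,64,67,81,170]] <|
  .leaf 1 [7]) <|
  .der [[1101,21,77,113], [1104,38,77,113], [1106,50,77,113], [1107,28,77,113], [1109,47,71,113],
  [1110,36,71,113], [1112,3,7,174], [1117,3,6,174], [1120,14,19,113], [1223,18,20,25,113],
  [1122,14,21,113], [1224,18,22,26,113], [1127,14,28,113], [1129,14,30,113], [1231,5,11,28,53,113,113],
  [1140,14,38,113], [1241,5,40,48,113], [1149,14,50,113], [1151,18,50,113], [1154,21,36,113],
  [1255,26,37,54,113], [1156,19,36,113], [1257,25,37,56,113], [1158,30,37,113], [1159,28,37,113],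
  [1160,25,47,113], [1161,19,47,113], [1162,30,48,113], [1163,28,44,113], [1164,30,44,113],
  [1165,38,47,113], [1266,39,48,65,113], [1167,50,53,113], [1269,39,48,67,113], [1168,30,53,113],
  [1175,14,71,113]] <|
  .leaf 1 [5,7]) <|
  .split 71 1 (
  .der [[1105,16,71,73,185], [1119,34,71,73,185], [1121,0,19,70,182], [1125,35,71,73,185],
  [1126,0,25,70,182], [1128,43,71,73,185], [1130,42,71,73,185], [1138,45,71,73,185], [1139,46,71,73,185],
  [1150,52,71,73,185]] <|
  .split 13 1 (
  .der [[1108,13,72,78,184]] <|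
  .split 80 1 (
  .leaf 1 [1,10]) <|
  .der [[1101,83,180], [1106,5,77,180], [1109,8,75,180], [1110,1,3,174], [1112,11,71,180],
  [1117,3,6,174], [2121,1,13,177], [1122,1,14,177], [1124,1,16,174], [1131,5,11,180], [1137,8,11,180],
  [1133,37,74,177], [2139,6,8,177], [1144,11,13,180], [1143,44,74,177], [1145,8,15,180], [1146,8,16,180],
  [1147,8,14,180], [1148,8,18,180], [1149,5,14,180], [2150,5,13,180], [1151,6,16,174], [2269,39,48,51,180],
  [1152,13,16,180], [1153,13,18,180], [2267,50,51,53,180], [2155,1,37,177], [1156,1,34,174],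
  [1157,1,35,174], [1158,11,25,180], [1160,8,23,180], [1361,19,20,47,60,78,79,184,180], [1162,6,35,174],
  [1164,11,30,180], [1168,6,42,174], [1104,9,73,74,185], [2138,4,13,177], [1140,4,14,177],
  [1241,40,51,72,78,184], [2165,4,47,177], [2266,65,69,72,78,184], [1107,12,73,74,185], [2126,7,8,177],
  [1127,7,15,174], [2128,7,13,177], [2159,7,37,177], [2163,7,43,174], [1132,43,78,79,184],
  [1136,32,77,174], [2154,1,32,174]] <|
  .split 70 1 (
  .leaf 1 [0,1]) <|
  .der [[2119,21,81,170], [1120,22,81,170], [1123,24,81,170], [2125,26,81,170], [1129,27,81,170],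
  [2130,28,81,170], [1134,32,81,170], [1135,33,81,170], [1142,43,81,170], [2156,1,34,174],
  [2261,56,65,81,170], [2360,23,25,48,61,72,78,184,180], [2157,1,35,174], [2158,7,35,174],
  [2262,58,69,81,170], [2164,7,42,174], [2268,64,67,81,170]] <|
  .leaf 1 [1]) <|
  .der [[1101,21,77,113], [1104,38,77,113], [1106,50,77,113], [1107,28,77,113], [1109,47,71,113],
  [1110,36,71,113], [1112,3,7,174], [1117,3,6,174], [1120,14,19,113], [1223,18,20,25,113],
  [1122,14,21,113], [1224,18,22,26,113], [1127,14,28,113], [1129,14,30,113], [1231,5,11,28,53,113,113],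
  [1140,14,38,113], [1241,5,40,48,113], [1149,14,50,113], [1151,5,53,113], [1154,21,36,113],
  [1255,26,37,54,113], [1156,19,36,113], [1257,25,37,56,113], [1158,30,37,113], [1159,26,44,113],
  [1160,25,47,113], [1161,19,47,113], [1162,30,48,113], [1163,28,44,113], [1164,30,44,113],
  [1165,38,47,113], [1266,39,48,65,113], [1167,50,53,113], [1269,39,48,67,113], [1168,30,53,113],
  [1175,14,71,113]] <|
  .leaf 1 [1,5]) <|
  .der [[1124,17,83,177,171]] <|
  .split 75 1 (
  .der [[1114,13,75,171], [1115,14,74,177], [1222,15,54,73,75,185], [1227,15,63,73,75,185],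
  [1240,15,65,73,75,185], [1249,15,67,73,75,185], [1120,19,75,171], [1123,25,75,171], [1129,30,75,171],
  [1141,39,75,171]] <|
  .split 80 1 (
  .der [[1105,6,80,177], [1111,12,80,171], [1116,3,5,171], [1118,16,77,174], [1231,5,7,11,17,177,171],
  [1151,6,16,174]] <|
  .leaf 1 [5,10]) <|
  .der [[1101,83,180], [1109,8,75,180], [1110,1,3,174], [1121,1,13,177], [2122,1,15,174], [1132,3,21,171],
  [1136,10,13,171], [1145,8,15,180], [1147,8,14,180], [2154,10,21,171], [1255,54,59,72,78,184],
  [1156,1,34,174], [1157,1,35,174], [1160,9,25,171], [1361,19,20,47,60,78,79,184,180], [1166,8,41,180],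
  [1104,9,73,74,185], [1138,4,13,177], [2140,4,15,174], [2165,9,38,171]] <|
  .split 79 1 (
  .der [[1119,30,78,79,184], [2120,19,75,171], [2361,19,20,47,60,78,79,184,180], [1134,3,19,171],
  [2156,1,34,174]] <|
  .leaf 1 [5,9]) <|
  .der [[1106,2,4,179], [1105,6,80,177], [1107,1,2,179], [1112,3,7,174], [1111,12,80,171],
  [1116,3,5,171], [1117,2,9,179], [1118,16,77,174], [2224,1,5,9,11,177,171], [1126,7,8,177],
  [2127,7,14,177], [1128,2,21,179], [2231,5,7,11,17,177,171], [1133,3,26,171], [1137,8,12,171],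
  [1139,6,8,177], [2141,5,9,171], [1143,2,32,179], [1144,12,13,171], [1146,8,16,180], [1148,8,17,171],
  [2366,39,41,48,65,72,78,184,180], [2149,5,14,180], [1150,5,13,180], [2151,5,18,180], [2269,39,48,51,180],
  [1152,13,16,180], [1253,2,13,14,48,180,179], [2267,50,51,53,180], [2155,10,26,171], [1158,2,57,179],
  [2159,7,33,174], [1262,2,23,25,48,180,179], [1368,2,29,30,53,62,180,179], [2163,7,43,174],
  [1164,7,42,174]] <|
  .split 70 1 (
  .leaf 1 [0,5]) <|
  .der [[1119,21,81,170], [2120,19,75,171], [2123,20,72,179], [1125,26,81,170], [2129,2,20,179],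
  [1130,2,19,179], [1134,3,19,171], [1135,3,25,171], [1142,3,30,171], [2156,1,34,174], [2261,56,65,81,170],
  [2360,23,25,48,61,72,78,184,180], [2157,1,35,174], [2158,7,35,174], [2262,58,69,81,170],
  [2368,2,29,30,53,62,180,179], [2164,11,30,180]] <|
  .leaf 1 [5]) <|
  .der [[1126,24,71,175], [1133,3,26,171], [1137,33,77,174], [1155,1,37,177], [1159,12,24,175]]
  <|
  .split 72 1 (
  .der [[1108,13,72,78,184], [1139,6,8,177], [1141,39,75,171], [1146,3,39,171], [1148,8,17,171],
  [1166,9,41,175], [1169,6,48,177], [1123,29,72,78,184], [1125,23,71,175], [1135,3,25,171],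
  [1157,1,35,174], [1158,12,25,171], [1160,9,23,175], [1162,6,35,174]] <|
  .split 80 1 (
  .der [[1105,6,80,177], [1111,12,80,171], [1116,3,5,171], [1118,16,77,174], [1231,5,7,11,17,177,171],
  [1151,6,16,174]] <|
  .leaf 1 [2,10]) <|
  .der [[1101,83,180], [1109,8,75,180], [1110,1,3,174], [1121,1,13,177], [1122,1,15,174], [1132,3,21,171],
  [1136,10,14,175], [1145,8,15,180], [1147,8,14,180], [2154,10,21,171], [2255,54,59,72,78,184],
  [1156,10,20,175], [2157,1,35,174], [2160,8,23,180], [1361,19,20,47,60,78,79,184,180], [2166,9,39,171],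
  [1104,9,73,74,185], [1138,4,13,177], [1140,4,15,174], [2165,8,40,180]] <|
  .split 79 1 (
  .der [[1119,30,78,79,184], [1120,19,75,171], [2361,19,20,47,60,78,79,184,180], [1134,3,19,171],
  [2156,1,34,174]] <|
  .leaf 1 [2,9]) <|
  .der [[1106,2,4,179], [1105,6,80,177], [1107,1,2,179], [1112,3,7,174], [1111,12,80,171],
  [1116,3,5,171], [1117,3,6,174], [1118,16,77,174], [2224,1,5,9,11,177,171], [2226,1,5,8,12,177,175],
  [1127,7,14,177], [1128,2,21,179], [2131,5,11,180], [2133,3,26,171], [2137,8,11,180], [2139,5,9,175],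
  [2141,4,18,177], [1143,2,32,179], [1144,11,13,180], [2146,3,39,171], [2148,8,18,180], [3366,39,41,48,65,72,78,184,180],
  [1149,5,14,180], [1150,2,38,179], [2151,5,17,171], [3269,17,51,66,175], [1352,2,3,15,15,48,50,175,180,179],
  [1153,13,18,180], [2267,50,51,53,180], [3155,10,26,171], [3259,12,31,55,175], [2158,11,25,180],
  [2162,6,35,174], [1368,2,29,30,53,62,180,179], [2163,12,28,171], [1164,11,30,180]] <|
  .split 70 1 (
  .leaf 1 [0,2]) <|
  .der [[1119,21,81,170], [1120,19,75,171], [2123,20,72,179], [2125,19,72,179], [1129,2,20,179],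
  [1130,2,19,179], [1134,3,19,171], [2135,3,23,175], [1142,2,34,179], [2156,10,20,175], [2261,56,65,81,170],
  [3360,23,25,48,61,72,78,184,180], [3157,10,23,175], [3158,12,23,175], [3262,58,69,81,170],
  [2368,2,29,30,53,62,180,179], [2164,11,30,180]] <|
  .leaf 1 [2]) <|
  .der [[1121,26,79,172], [1122,21,75,171], [1127,2,24,172], [1128,2,26,172], [1132,3,21,171],
  [1136,37,79,172], [1143,2,33,172], [1144,2,37,172], [1154,1,36,177], [1163,7,43,174]] <|
  .split 76 1 (
  .der [[1101,4,76,81,182], [1110,1,3,174], [2154,1,36,177], [2155,1,37,177], [1156,1,34,174],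
  [1157,10,23,175], [1107,6,76,81,182], [1112,3,7,174], [1111,12,80,171], [1231,7,11,51,177],
  [2259,12,31,55,175], [1158,12,23,175], [2163,2,59,172], [1164,2,58,172]] <|
  .split 70 1 (
  .leaf 1 [0,6]) <|
  .der [[1119,21,81,170], [1120,19,75,171], [1123,24,81,170], [1125,26,81,170], [1129,2,23,172],
  [1130,2,25,172], [1134,3,19,171], [1135,3,23,175], [1142,2,35,172], [2156,1,34,174], [1261,56,65,81,170],
  [2157,10,23,175], [1260,57,66,81,170], [2158,12,25,171], [1262,58,69,81,170], [2164,7,42,174],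
  [1268,64,67,81,170]] <|
  .leaf 1 [6]) <|
  .der [[1138,0,21,176], [1139,0,26,176], [1140,0,22,176], [1141,0,24,176], [1145,0,32,176],
  [1146,0,33,176], [1147,0,36,176], [1148,0,37,176], [1149,2,41,172], [1150,2,39,172], [1152,0,43,176],
  [1153,0,44,176], [1165,9,40,175], [1166,4,46,174], [1167,6,52,174], [1169,17,41,175], [1108,0,3,83,174,175,176],
  [1113,2,8,172], [1114,13,75,171], [1115,14,74,177]] <|
  .split 80 1 (
  .der [[1105,6,80,177], [1111,12,80,171], [1116,3,5,171], [1118,0,11,176], [1231,5,7,11,17,177,171],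
  [1151,0,31,176]] <|
  .split 70 1 (
  .leaf 1 [0,10]) <|
  .der [[1119,21,81,170], [1120,19,75,171], [1123,24,81,170], [1125,23,71,175], [1129,2,23,172],
  [1130,2,25,172], [1134,3,19,171], [1135,3,23,175], [1142,2,35,172], [1156,10,20,175], [1261,56,65,81,170],
  [1157,10,23,175], [1360,57,57,66,82,176,170], [1158,12,23,175], [1262,58,69,81,170], [1164,7,42,174],
  [1268,64,67,81,170]] <|
  .leaf 1 [10]) <|
  .der [[1101,83,180], [1104,0,1,176], [1109,3,4,174], [1110,1,3,174], [2121,1,13,177], [2122,1,14,177],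
  [2132,3,21,171], [2136,10,14,175], [2138,0,21,176], [2140,0,22,176], [2145,3,38,171], [2147,8,14,180],
  [3154,10,22,175], [2255,54,59,72,78,184], [1156,1,34,174], [1157,10,23,175], [1160,4,35,174],
  [1361,19,20,47,60,78,79,184,180], [3165,9,38,171], [2266,65,69,72,78,184]] <|
  .split 79 1 (
  .der [[1119,25,79,172], [1120,19,75,171], [2361,19,20,47,60,78,79,184,180], [1134,3,19,171],
  [2156,10,19,171]] <|
  .split 70 1 (
  .leaf 1 [0,9]) <|
  .der [[2119,21,81,170], [2120,19,75,171], [1123,24,81,170], [1125,23,71,175], [1129,2,23,172],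
  [1130,2,25,172], [2134,3,19,171], [1135,3,23,175], [1142,2,35,172], [3156,10,19,171], [3361,56,56,65,82,176,170],
  [2360,23,25,48,61,72,78,184,180], [2157,10,23,175], [1158,7,35,174], [1362,58,58,69,82,176,170],
  [1164,2,58,172], [1368,64,64,67,82,176,170]] <|
  .leaf 1 [9]) <|
  .der [[1106,2,4,179], [1105,6,80,177], [1107,1,2,179], [1112,3,7,174], [1111,12,80,171],
  [1116,3,5,171], [1117,2,9,179], [1118,0,11,176], [2124,1,16,174], [2126,7,8,177], [2227,2,7,11,40,177,172],
  [2228,2,5,12,21,175,172], [2131,7,16,174], [2133,3,26,171], [2237,8,10,11,17,171,175], [2139,0,26,176],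
  [2141,4,16,174], [2143,3,27,175], [2144,11,13,180], [2146,8,16,180], [2148,8,18,180], [3366,39,41,48,65,72,78,184,180],
  [2249,2,5,18,40,172,180], [2150,2,38,179], [2151,5,17,171], [3269,17,51,66,175], [2252,2,13,15,46,180,179],
  [2153,13,18,180], [3267,50,51,53,180], [3155,1,33,174], [3259,12,31,55,175], [1158,7,35,174],
  [1162,6,35,174], [1368,2,29,30,53,62,180,179], [3163,11,28,180], [1164,11,30,180]] <|
  .split 70 2 (
  .leaf 1 [0,0]) <|
  .der [[1119,21,81,170], [1120,19,75,171], [1123,24,81,170], [1125,19,72,179], [1129,2,23,172],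
  [1130,2,25,172], [1134,3,19,171], [1135,3,25,171], [1142,2,35,172], [2156,1,34,174], [2361,56,56,65,82,176,170],
  [2360,23,25,48,61,72,78,184,180], [2157,1,35,174], [2158,7,35,174], [2262,58,69,81,170],
  [2368,2,29,30,53,62,180,179], [2164,12,30,171]] <|
  .split 70 1 (
  .leaf 1 [0]) <|
  .der [[2119,21,81,170], [2120,19,75,171], [2123,24,81,170], [2125,19,72,179], [2129,2,23,172],
  [2130,2,25,172], [2134,3,19,171], [2135,3,23,175], [2142,2,35,172], [3156,10,20,175], [3361,56,56,65,82,176,170],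
  [3360,23,25,48,61,72,78,184,180], [3157,10,23,175], [3158,7,35,174], [3362,58,58,69,82,176,170],
  [3368,2,29,30,53,62,180,179], [3164,11,30,180]] <|
  .leaf 1 []

theorem check_tree : check tree [(86, 1)] = true := by decide +kernel

/-- A point as a function on `ℕ`. -/
def mk (k : Fin 4 → ℤ) (p : Fin 12 → ℤ) (n : ℕ) : ℤ :=
  if h : n < 12 then p ⟨n, h⟩ else if h : n - 12 < 4 then k ⟨n - 12, h⟩ else 0

set_option maxHeartbeats 4000000 in
theorem slacks_iff (k : Fin 4 → ℤ) (p : Fin 12 → ℤ) :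
    (∀ v ∈ slacks.map (dec true 16), 0 ≤ dot v (mk k p)) ↔ SatisfiesIneqs k p := by
  simp only [slacks, List.map_cons, List.map_nil, List.forall_mem_cons, List.not_mem_nil,
    false_implies, implies_true, and_true]
  unfold SatisfiesIneqs
  repeat' refine and_congr ?_ ?_
  all_goals
    simp [dec, dot, mk, Int.negOfNat, Nat.ble]
    try (constructor <;> intro h <;> linarith)

theorem coords_iff (k : Fin 4 → ℤ) (p : Fin 12 → ℤ) :
    (∀ v ∈ coords.map (dec false 16), 0 ≤ dot v (mk k p)) ↔ (∀ i, 0 ≤ k i) ∧ ∀ j, 0 ≤ p j := by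
  simp only [coords, List.map_cons, List.map_nil, List.forall_mem_cons, List.not_mem_nil,
    false_implies, implies_true, and_true]
  simp [dec, dot, mk, Fin.forall_fin_succ]
  constructor
  · rintro ⟨_, _, _, _, _, _, _, _, _, _, _, _, _, _, _, _, _⟩
    refine ⟨⟨?_, ?_, ?_, ?_⟩, ?_, ?_, ?_, ?_, ?_, ?_, ?_, ?_, ?_, ?_, ?_, ?_⟩ <;> assumption
  · rintro ⟨⟨_, _, _, _⟩, _, _, _, _, _, _, _, _, _, _, _, _⟩
    refine ⟨?_, ?_, ?_, ?_, ?_, ?_, ?_, ?_, ?_, ?_, ?_, ?_, ?_, ?_, ?_, ?_, ?_⟩ <;>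
      first | assumption | linarith

theorem C_iff (k : Fin 4 → ℤ) (p : Fin 12 → ℤ) :
    C (mk k p) ↔ (∀ i, 0 ≤ k i) ∧ p ∈ SigmaSet k := by
  have h : C (mk k p) ↔ (∀ v ∈ slacks.map (dec true 16), 0 ≤ dot v (mk k p)) ∧
      (∀ v ∈ coords.map (dec false 16), 0 ≤ dot v (mk k p)) := by
    unfold C FM
    exact List.forall_mem_append
  rw [h, slacks_iff, coords_iff]
  unfold SigmaSet
  simp only [Set.mem_ofPred_eq]
  tauto

theorem mk_add (k m : Fin 4 → ℤ) (p q : Fin 12 → ℤ) :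
    mk (k + m) (p + q) = fun n => mk k p n + mk m q n := by
  funext n
  unfold mk
  split_ifs <;> simp

theorem C_add {x y : ℕ → ℤ} (hx : C x) (hy : C y) : C (fun n => x n + y n) := by
  intro v hv
  rw [dot_add]
  exact add_nonneg (hx v hv) (hy v hv)

theorem sigma_add_mem {k m : Fin 4 → ℤ} {p q : Fin 12 → ℤ} (hk : ∀ i, 0 ≤ k i) (hm : ∀ i, 0 ≤ m i)
    (hp : p ∈ SigmaSet k) (hq : q ∈ SigmaSet m) : p + q ∈ SigmaSet (k + m) := by
  have h := C_add ((C_iff k p).2 ⟨hk, hp⟩) ((C_iff m q).2 ⟨hm, hq⟩)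
  rw [← mk_add] at h
  exact ((C_iff _ _).1 h).2

theorem pt_of_lt {L : List ℕ} (hL : ∀ t ∈ L, t < 12) {n : ℕ} (hn : 12 ≤ n) : pt L n = 0 := by
  induction L with
  | nil => rfl
  | cons t L ih =>
    have h1 : t < 12 := hL t (by simp)
    have h2 : n ≠ t := by omega
    simp [pt, unit, h2, ih (fun s hs => hL s (by simp [hs]))]

theorem pt_eq_mk {i : ℕ} (hi : i < 4) {L : List ℕ} (hL : ∀ t ∈ L, t < 12) :
    pt ((12 + i) :: L) = mk (Pi.single ⟨i, hi⟩ 1) (fun j => pt L j) := by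
  funext n
  unfold mk
  by_cases h : n < 12
  · have h1 : n ≠ 12 + i := by omega
    simp [pt, unit, h, h1]
  · have h0 := pt_of_lt hL (n := n) (by omega)
    by_cases h2 : n - 12 < 4
    · by_cases h3 : n = 12 + i
      · subst h3
        simp [pt, unit, h0, hi]
      · have h4 : (⟨n - 12, h2⟩ : Fin 4) ≠ ⟨i, hi⟩ := by
          intro h5; have := congrArg Fin.val h5; simp at this; omega
        simp [pt, unit, h, h0, h2, h3, h4]
    · have h3 : n ≠ 12 + i := by omega
      simp [pt, unit, h, h0, h2, h3]

/-- One can split off a point of some `Σ(ω_i)`. -/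
theorem peel {k : Fin 4 → ℤ} {p : Fin 12 → ℤ} (hk : ∀ i, 0 ≤ k i) (hp : p ∈ SigmaSet k)
    (h1 : 1 ≤ ∑ i, k i) : ∃ (i : Fin 4) (q r : Fin 12 → ℤ) (l : Fin 4 → ℤ), p = q + r ∧
      k = Pi.single i 1 + l ∧ (∀ j, 0 ≤ l j) ∧ q ∈ SigmaSet (Pi.single i 1) ∧ r ∈ SigmaSet l := by
  have hC := (C_iff k p).2 ⟨hk, hp⟩
  have hg : Good [(86, 1)] (mk k p) := by
    intro z hz
    simp only [List.mem_singleton] at hz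
    subst hz
    have h2 : form 86 = [0,0,0,0,0,0,0,0,0,0,0,0,1,1,1,1] := by decide +kernel
    rw [h2]
    rw [Fin.sum_univ_four] at h1
    simp [dot, mk]
    linarith
  obtain ⟨i, L, hi, hL, h⟩ := check_sound hC tree hg check_tree
  have hpt := pt_eq_mk hi hL
  set q : Fin 12 → ℤ := fun j => pt L j with hq
  have e1 : p = q + (p - q) := by abel
  have e2 : k = Pi.single ⟨i, hi⟩ 1 + (k - Pi.single ⟨i, hi⟩ 1) := by abel
  have e3 := mk_add (Pi.single ⟨i, hi⟩ 1) (k - Pi.single ⟨i, hi⟩ 1) q (p - q)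
  rw [← e1, ← e2] at e3
  have hCq : C (mk (Pi.single ⟨i, hi⟩ 1) q) := by
    intro v hv
    rw [← hpt, dot_pt]
    exact (h v hv).1
  have hCr : C (mk (k - Pi.single ⟨i, hi⟩ 1) (p - q)) := by
    intro v hv
    have h2 := (h v hv).2
    rw [← dot_pt, hpt, e3, dot_add] at h2
    linarith
  exact ⟨⟨i, hi⟩, q, p - q, k - Pi.single ⟨i, hi⟩ 1, e1, e2, ((C_iff _ _).1 hCr).1,
    ((C_iff _ _).1 hCq).2, ((C_iff _ _).1 hCr).2⟩

theorem zero_mem_sigma {k : Fin 4 → ℤ} (hk : ∀ i, 0 ≤ k i) : (0 : Fin 12 → ℤ) ∈ SigmaSet k := by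
  have a := hk 0
  have b := hk 1
  have c := hk 2
  have d := hk 3
  refine ⟨fun _ => le_rfl, ?_⟩
  unfold SatisfiesIneqs
  simp only [Pi.zero_apply]
  repeat' refine And.intro ?_ ?_
  all_goals linarith

theorem sigma_zero {p : Fin 12 → ℤ} (hp : p ∈ SigmaSet 0) : p = 0 := by
  obtain ⟨h0, h⟩ := hp
  unfold SatisfiesIneqs at h
  simp only [Pi.zero_apply] at h
  obtain ⟨_, _, _, _, _, h6, _, _, h9, _, _, h12, _, h14, _, _, _, _, _, h20, _⟩ := h
  have a0 := h0 0
  have a1 := h0 1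
  have a2 := h0 2
  have a3 := h0 3
  have a4 := h0 4
  have a5 := h0 5
  have a6 := h0 6
  have a7 := h0 7
  have a8 := h0 8
  have a9 := h0 9
  have a10 := h0 10
  have a11 := h0 11
  funext j
  fin_cases j <;> simp <;> omega

theorem split_mem (n : ℕ) : ∀ (k m : Fin 4 → ℤ) (p : Fin 12 → ℤ), (∀ i, 0 ≤ k i) →
    (∀ i, 0 ≤ m i) → ∑ i, (k + m) i = n → p ∈ SigmaSet (k + m) →
    ∃ q ∈ SigmaSet k, ∃ r ∈ SigmaSet m, q + r = p := by
  induction n with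
  | zero =>
    intro k m p hk hm hn hp
    have h : k + m = 0 := by
      funext i
      have h1 := (Finset.sum_eq_zero_iff_of_nonneg
        (fun i _ => add_nonneg (hk i) (hm i))).1 (by simpa using hn) i (Finset.mem_univ i)
      simpa using h1
    rw [h] at hp
    exact ⟨0, zero_mem_sigma hk, 0, zero_mem_sigma hm, by rw [sigma_zero hp]; simp⟩
  | succ n ih =>
    intro k m p hk hm hn hp
    obtain ⟨i, q, r, l, rfl, hl, hl0, hq, hr⟩ := peel (k := k + m)
      (fun i => add_nonneg (hk i) (hm i)) hp
      (by rw [hn]; push_cast; omega)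
    have hs : ∀ j, (0 : ℤ) ≤ (Pi.single i 1 : Fin 4 → ℤ) j := by
      intro j
      by_cases h : j = i
      · subst h; simp
      · simp [h]
    have hsum : ∑ j, l j = n := by
      rw [hl] at hn
      simp only [Pi.add_apply, Finset.sum_add_distrib, Finset.sum_pi_single', Finset.mem_univ,
        if_true] at hn
      simp at hn
      linarith
    have hi : 1 ≤ k i + m i := by
      have h1 := congrFun hl i
      have h2 := hl0 i
      simp at h1
      linarith
    have key : ∀ a : Fin 4 → ℤ, (∀ j, 0 ≤ a j) → 1 ≤ a i →
        ∀ j, 0 ≤ (a - (Pi.single i 1 : Fin 4 → ℤ)) j := by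
      intro a ha h1 j
      by_cases h : j = i
      · subst h; simp; linarith
      · simp [h, ha j]
    by_cases hki : 1 ≤ k i
    · have e : (k - Pi.single i 1) + m = l := by
        have : k + m - Pi.single i 1 = l := by rw [hl]; abel
        rw [← this]; abel
      obtain ⟨s, hs1, t, ht, rfl⟩ := ih (k - Pi.single i 1) m r (key k hk hki) hm
        (by rw [e]; exact hsum) (by rw [e]; exact hr)
      refine ⟨q + s, ?_, t, ht, by abel⟩
      have := sigma_add_mem hs (key k hk hki) hq hs1
      rwa [add_sub_cancel] at this
    · have hmi : 1 ≤ m i := by linarith [not_le.1 hki]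
      have e : k + (m - Pi.single i 1) = l := by
        have : k + m - Pi.single i 1 = l := by rw [hl]; abel
        rw [← this]; abel
      obtain ⟨s, hs1, t, ht, rfl⟩ := ih k (m - Pi.single i 1) r hk (key m hm hmi)
        (by rw [e]; exact hsum) (by rw [e]; exact hr)
      refine ⟨s, hs1, q + t, ?_, by abel⟩
      have := sigma_add_mem hs (key m hm hmi) hq ht
      rwa [add_sub_cancel] at this

end D4Cone

/-- Theorem 1 of the paper: Σ(k+m) = Σ(k) + Σ(m) (Minkowski sum in ℤ^12). -/
theorem sigmaSet_add (k m : Fin 4 → ℤ) (hk : ∀ i, 0 ≤ k i) (hm : ∀ i, 0 ≤ m i) :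
    SigmaSet (k + m) = SigmaSet k + SigmaSet m := by
  ext p
  rw [Set.mem_add]
  constructor
  · intro hp
    have h0 : 0 ≤ ∑ i, (k + m) i := Finset.sum_nonneg (fun i _ => add_nonneg (hk i) (hm i))
    exact D4Cone.split_mem (∑ i, (k + m) i).toNat k m p hk hm (Int.toNat_of_nonneg h0).symm hp
  · rintro ⟨q, hq, r, hr, rfl⟩
    exact D4Cone.sigma_add_mem hk hm hq hr
end

section
/- For every k = (k1,k2,k3,k4) with nonnegative integer entries, the set Σ(k) is finite and its cardinality equals the Weyl dimension of the irreducible module of type D4 with highest weight k1ω1+k2ω2+k3ω3+k4ω4, namely |Σ(k)| = (∏_{1≤i<j≤4} (L_i² − L_j²)) / 17694720, where L1 = 2k1+2k2+k3+k4+6, L2 = 2k2+k3+k4+4, L3 = k3+k4+2, L4 = k4−k3. (This is Theorem 2 of the paper: |Σ^f(λ)| = dim V(λ) for every dominant weight λ of the Lie algebra of type D4.) -/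
/-- Pairing of a linear form with a point, both given by coordinate lists. -/
def ev : List ℤ → List ℤ → ℤ
  | a :: f, x :: xs => a * x + ev f xs
  | _, _ => 0

/-- The list `f + c • n`. -/
def cb : List ℤ → ℤ → List ℤ → List ℤ
  | a :: f, c, b :: n => (a + c * b) :: cb f c n
  | [], c, n => n.map (c * ·)
  | f, _, [] => f

@[simp] lemma ev_nil (x : List ℤ) : ev [] x = 0 := by simp [ev]
@[simp] lemma ev_nil' (x : List ℤ) : ev x [] = 0 := by cases x <;> simp [ev]

lemma ev_comm : ∀ f x : List ℤ, ev f x = ev x f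
  | [], x => by simp
  | f, [] => by simp
  | a :: f, x :: xs => by simp only [ev, ev_comm f xs]; ring

lemma ev_map (c : ℤ) : ∀ n x : List ℤ, ev (n.map (c * ·)) x = c * ev n x
  | [], x => by simp
  | n, [] => by simp
  | a :: f, x :: xs => by simp only [ev, List.map_cons, ev_map c f xs]; ring

lemma ev_cb (c : ℤ) : ∀ f n x : List ℤ, ev (cb f c n) x = ev f x + c * ev n x
  | [], n, x => by simp [cb, ev_map]
  | a :: f, [], x => by simp [cb]
  | a :: f, b :: n, [] => by simp
  | a :: f, b :: n, x :: xs => by simp only [cb, ev, ev_cb c f n xs]; ring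

lemma ev_cb' (c : ℤ) (f n x : List ℤ) : ev x (cb f c n) = ev x f + c * ev x n := by
  rw [ev_comm, ev_cb, ev_comm f, ev_comm n]

lemma cb_length (c : ℤ) : ∀ x v : List ℤ, v.length ≤ x.length → (cb x c v).length = x.length
  | [], v, h => by simpa [cb] using h
  | a :: x, [], h => by simp [cb]
  | a :: x, b :: v, h => by simpa [cb] using cb_length c x v (by simpa using h)

lemma cb_drop (c : ℤ) : ∀ (m : ℕ) (x v : List ℤ), v.length ≤ m → m ≤ x.length →
    (cb x c v).drop m = x.drop m
  | 0, x, v, h, _ => by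
    have : v = [] := by simpa using h
    subst this; cases x <;> simp [cb]
  | m + 1, [], v, h, h' => by simp at h'
  | m + 1, a :: x, [], h, _ => by simp [cb]
  | m + 1, a :: x, b :: v, h, h' => by
    simpa [cb] using cb_drop c m x v (by simpa using h) (by simpa using h')

lemma cb_cb (c d : ℤ) (hcd : c + d = 0) : ∀ x v : List ℤ, v.length ≤ x.length →
    cb (cb x c v) d v = x
  | [], v, h => by
    have : v = [] := by simpa using h
    subst this; simp [cb]
  | a :: x, [], h => by simp [cb]
  | a :: x, b :: v, h => by
    simp only [cb, cb_cb c d hcd x v (by simpa using h), List.cons.injEq, and_true]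
    linear_combination b * hcd

/-- Point `x` satisfies all inequalities `0 ≤ f` for `f ∈ F`. -/
def PosOn (F : List (List ℤ)) (x : List ℤ) : Prop := ∀ f ∈ F, 0 ≤ ev f x

/-- Add a combination of members of `F`, given as a list of index/coefficient pairs. -/
def acc (F : List (List ℤ)) : List ℕ → List ℤ → List ℤ
  | i :: c :: L, r => acc F L (cb r c (F.getD i []))
  | _, r => r

/-- Certificate check: `m • g = t • s + ∑ c • F[i]`. -/
def vc (F : List (List ℤ)) (s g : List ℤ) : List ℕ → Bool
  | m :: t :: L => decide (0 < m) && (cb (acc F L (cb [] t s)) (-(m : ℤ)) g).all (· == 0)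
  | _ => false

lemma acc_nonneg {F : List (List ℤ)} {x : List ℤ} (h : PosOn F x) : ∀ (L : List ℕ) (r : List ℤ),
    0 ≤ ev r x → 0 ≤ ev (acc F L r) x
  | [], r, hr => by simpa [acc] using hr
  | [_], r, hr => by simpa [acc] using hr
  | i :: c :: L, r, hr => by
    rw [acc]
    apply acc_nonneg h L
    rw [ev_cb]
    have : 0 ≤ ev (F.getD i []) x := by
      by_cases hi : i < F.length
      · apply h; rw [List.getD_eq_getElem _ _ hi]; exact List.getElem_mem hi
      · rw [List.getD_eq_default _ _ (by omega)]; simp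
    positivity

lemma ev_zero : ∀ (l x : List ℤ), l.all (· == 0) = true → ev l x = 0
  | [], x, _ => by simp
  | a :: l, [], _ => by simp
  | a :: l, y :: x, h => by
    simp only [List.all_cons, Bool.and_eq_true, beq_iff_eq] at h
    rw [ev, h.1, ev_zero l x h.2]; simp

lemma vc_sound {F : List (List ℤ)} {s g : List ℤ} {L : List ℕ} (h : vc F s g L = true)
    {x : List ℤ} (hx : PosOn F x) (hs : 0 ≤ ev s x) : 0 ≤ ev g x := by
  match L, h with
  | m :: t :: L, h =>
    simp only [vc, Bool.and_eq_true, decide_eq_true_eq] at h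
    have h1 := ev_zero _ x h.2
    have h2 := acc_nonneg hx L (cb [] t s) (by rw [ev_cb]; simp; positivity)
    rw [ev_cb] at h1
    have hm : (0 : ℤ) < m := by exact_mod_cast h.1
    by_contra hg
    push Not at hg
    nlinarith [mul_pos hm (neg_pos.mpr hg)]

/-- Consume one certificate when `b` holds. -/
def need (b : Bool) (p : List ℕ → Bool) (cs : List (List ℕ)) (k : List (List ℕ) → Bool) : Bool :=
  match b, cs with
  | false, cs => k cs
  | true, [] => false
  | true, c :: cs => p c && k cs

lemma need_sound {b : Bool} {p : List ℕ → Bool} {cs : List (List ℕ)} {k : List (List ℕ) → Bool}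
    (h : need b p cs k = true) : (b = true → ∃ c, p c = true) ∧ ∃ cs', k cs' = true := by
  match b, cs, h with
  | false, cs, h => exact ⟨by simp, cs, h⟩
  | true, c :: cs, h =>
    simp only [need, Bool.and_eq_true] at h
    exact ⟨fun _ => ⟨c, h.1⟩, cs, h.2⟩

def forceN {α : Type} : ℕ → (ℕ → α) → α
  | 0, k => k 0
  | n + 1, k => k (n + 1)
def forceZ {α : Type} : ℤ → (ℤ → α) → α
  | Int.ofNat n, k => forceN n fun n => k (Int.ofNat n)
  | Int.negSucc n, k => forceN n fun n => k (Int.negSucc n)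
def forceL {α : Type} : List ℤ → (List ℤ → α) → α
  | [], k => k []
  | a :: l, k => forceZ a fun a => forceL l fun l => k (a :: l)
def forceM {α : Type} : List (List ℤ) → (List (List ℤ) → α) → α
  | [], k => k []
  | a :: l, k => forceL a fun a => forceM l fun l => k (a :: l)
lemma forceN_eq {α : Type} (n : ℕ) (k : ℕ → α) : forceN n k = k n := by cases n <;> rfl
lemma forceZ_eq {α : Type} (n : ℤ) (k : ℤ → α) : forceZ n k = k n := by
  cases n <;> simp only [forceZ, forceN_eq]
lemma forceL_eq {α : Type} : ∀ (l : List ℤ) (k : List ℤ → α), forceL l k = k l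
  | [], k => rfl
  | a :: l, k => by rw [forceL, forceZ_eq, forceL_eq l]
lemma forceM_eq {α : Type} : ∀ (l : List (List ℤ)) (k : List (List ℤ) → α), forceM l k = k l
  | [], k => rfl
  | a :: l, k => by rw [forceM, forceL_eq, forceM_eq l]

/-- Facets after the mutation; each base-4 digit of `q` says which of `f`, `f + c n` survive. -/
def build (v n : List ℤ) : List (List ℤ) → ℕ → List (List ℤ)
  | [], _ => []
  | f :: fs, q => (if q % 2 = 1 then [f] else []) ++
      (if q / 2 % 2 = 1 then [cb f (ev f v) n] else []) ++ build v n fs (q / 4)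

/-- Check of one mutation. -/
def walk (F F2 : List (List ℤ)) (v n ns : List ℤ) :
    List (List ℤ) → ℕ → List (List ℕ) → Bool
  | [], _, _ => true
  | f :: fs, q, cs =>
    forceZ (ev f v) fun c =>
    need (decide (q % 2 = 1) && decide (c < 0)) (vc F ns (cb f (-c) n)) cs fun cs =>
    need (decide (q / 2 % 2 = 1) && decide (c < 0)) (vc F n (cb f c n)) cs fun cs =>
    need (!(decide (q % 2 = 1) || (decide (q / 2 % 2 = 1) && decide (c ≤ 0)))) (vc F2 n f) cs fun cs =>
    need (!(decide (q / 2 % 2 = 1) || (decide (q % 2 = 1) && decide (c ≤ 0)))) (vc F2 ns (cb f c n)) cs fun cs =>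
    forceN (q / 4) fun q => walk F F2 v n ns fs q cs

set_option maxHeartbeats 1000000 in
lemma walk_sound {F F2 : List (List ℤ)} {v n ns : List ℤ} (hns : ∀ x, ev ns x = - ev n x)
    (hnv : ev n v = 0) : ∀ (fs : List (List ℤ)) (q : ℕ) (cs : List (List ℕ)),
    walk F F2 v n ns fs q cs = true → (∀ f ∈ fs, f ∈ F) → (∀ g ∈ build v n fs q, g ∈ F2) →
    (∀ x, PosOn F x → 0 ≤ ev n x → ∀ g ∈ build v n fs q, 0 ≤ ev g x) ∧
    (∀ x, PosOn F x → ev n x ≤ 0 → ∀ g ∈ build v n fs q, 0 ≤ ev g x - ev g v * ev n x) ∧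
    (∀ x, PosOn F2 x → 0 ≤ ev n x → ∀ f ∈ fs, 0 ≤ ev f x) ∧
    (∀ x, PosOn F2 x → ev n x ≤ 0 → ∀ f ∈ fs, 0 ≤ ev f x + ev f v * ev n x)
  | [], q, cs, _, _, _ => by simp [build]
  | f :: fs, q, cs, h, hF, hF2 => by
    rw [walk, forceZ_eq] at h
    obtain ⟨h1, cs1, h⟩ := need_sound h
    obtain ⟨h2, cs2, h⟩ := need_sound h
    obtain ⟨h3, cs3, h⟩ := need_sound h
    obtain ⟨h4, cs4, h⟩ := need_sound h
    rw [forceN_eq] at h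
    simp only [build, List.mem_append] at hF2
    obtain ⟨i1, i2, i3, i4⟩ := walk_sound hns hnv fs (q / 4) cs4 h
      (fun g hg => hF g (List.mem_cons_of_mem _ hg)) (fun g hg => hF2 g (Or.inr hg))
    have hf : f ∈ F := hF f (by simp)
    set c := ev f v with hc
    have m1 : q % 2 = 1 → f ∈ F2 := fun e => hF2 f (Or.inl (Or.inl (by simp [e])))
    have m2 : q / 2 % 2 = 1 → cb f c n ∈ F2 := fun e => hF2 _ (Or.inl (Or.inr (by simp [e])))
    refine ⟨?_, ?_, ?_, ?_⟩
    · intro x hx hn g hg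
      simp only [build, List.mem_append] at hg
      rcases hg with (hg | hg) | hg
      · split_ifs at hg with e
        · rw [List.mem_singleton] at hg; subst hg; exact hx _ hf
        · simp at hg
      · split_ifs at hg with e
        · rw [List.mem_singleton] at hg; subst hg
          rcases lt_or_ge c 0 with hc0 | hc0
          · obtain ⟨L, hL⟩ := h2 (by simp [e, hc0])
            exact vc_sound hL hx hn
          · rw [ev_cb]; have := hx _ hf; rw [← hc]; positivity
        · simp at hg
      · exact i1 x hx hn g hg
    · intro x hx hn g hg
      simp only [build, List.mem_append] at hg
      rcases hg with (hg | hg) | hg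
      · split_ifs at hg with e
        · rw [List.mem_singleton] at hg; subst hg
          rcases lt_or_ge c 0 with hc0 | hc0
          · obtain ⟨L, hL⟩ := h1 (by simp [e, hc0])
            have := vc_sound hL hx (by rw [hns]; omega)
            rw [ev_cb] at this
            rw [← hc]; linarith
          · have := hx _ hf; rw [← hc]; nlinarith [mul_nonneg hc0 (neg_nonneg.mpr hn)]
        · simp at hg
      · split_ifs at hg with e
        · rw [List.mem_singleton] at hg; subst hg
          have := hx _ hf
          rw [ev_cb, ev_cb, hnv, ← hc]; linarith
        · simp at hg
      · exact i2 x hx hn g hg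
    · intro x hx hn g hg
      rcases List.mem_cons.mp hg with hg | hg
      · subst hg
        by_cases e1 : q % 2 = 1
        · exact hx _ (m1 e1)
        · by_cases e2 : q / 2 % 2 = 1 ∧ c ≤ 0
          · have := hx _ (m2 e2.1)
            rw [ev_cb] at this
            nlinarith [mul_nonneg (neg_nonneg.mpr e2.2) hn]
          · obtain ⟨L, hL⟩ := h3 (by simp only [Bool.not_eq_true', Bool.or_eq_false_iff, decide_eq_false_iff_not, Bool.and_eq_false_iff]; exact ⟨e1, not_and_or.mp e2⟩)
            exact vc_sound hL hx hn
      · exact i3 x hx hn g hg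
    · intro x hx hn g hg
      rcases List.mem_cons.mp hg with hg | hg
      · subst hg
        by_cases e1 : q / 2 % 2 = 1
        · have := hx _ (m2 e1)
          rwa [ev_cb] at this
        · by_cases e2 : q % 2 = 1 ∧ c ≤ 0
          · have := hx _ (m1 e2.1)
            rw [← hc]
            nlinarith [mul_nonneg (neg_nonneg.mpr e2.2) (neg_nonneg.mpr hn)]
          · obtain ⟨L, hL⟩ := h4 (by simp only [Bool.not_eq_true', Bool.or_eq_false_iff, decide_eq_false_iff_not, Bool.and_eq_false_iff]; exact ⟨e1, not_and_or.mp e2⟩)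
            have := vc_sound hL hx (by rw [hns]; omega)
            rwa [ev_cb] at this
      · exact i4 x hx hn g hg

/-- Integer points with last four coordinates `k` in the cone of `F`. -/
def Sol (k : List ℤ) (F : List (List ℤ)) : Set (List ℤ) :=
  {x | x.length = 16 ∧ x.drop 12 = k ∧ PosOn F x}

/-- Check a chain of mutations from `F` to `E`. -/
def run : List (List ℤ) → List (List ℤ × List ℤ × ℕ × List (List ℕ)) → List (List ℤ) → Bool
  | F, [], E => decide (F = E)
  | F, (v, n, q, cs) :: st, E =>
    forceM (build v n F q) fun F2 =>
      decide (v.length ≤ 12) && decide (ev n v = 0) &&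
        walk F F2 v n (cb [] (-1) n) F q cs && run F2 st E

lemma step_encard {F : List (List ℤ)} {v n : List ℤ} {q : ℕ} {cs : List (List ℕ)}
    (hv : v.length ≤ 12) (hnv : ev n v = 0)
    (h : walk F (build v n F q) v n (cb [] (-1) n) F q cs = true) (k : List ℤ) :
    (Sol k F).encard = (Sol k (build v n F q)).encard := by
  obtain ⟨i1, i2, i3, i4⟩ := walk_sound (by intro x; rw [ev_cb]; simp) hnv F q cs h
    (fun _ h => h) (fun _ h => h)
  have en : ∀ x t, ev n (cb x t v) = ev n x := by intro x t; rw [ev_cb', hnv]; simp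
  have hb : Set.BijOn (fun x => cb x (-(min 0 (ev n x))) v) (Sol k F) (Sol k (build v n F q)) := by
    refine Set.InvOn.bijOn (f' := fun x => cb x (min 0 (ev n x)) v) ⟨?_, ?_⟩ ?_ ?_
    · intro x hx
      simp only [en]
      exact cb_cb _ _ (by ring) _ _ (by rw [hx.1]; omega)
    · intro x hx
      simp only [en]
      exact cb_cb _ _ (by ring) _ _ (by rw [hx.1]; omega)
    · rintro x ⟨h1, h2, h3⟩
      refine ⟨by rw [cb_length _ _ _ (by omega), h1], by rw [cb_drop _ _ _ _ hv (by omega), h2], ?_⟩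
      intro g hg
      rw [ev_cb']
      rcases le_total 0 (ev n x) with h0 | h0
      · rw [min_eq_left h0]; simpa using i1 x h3 h0 g hg
      · rw [min_eq_right h0]; have := i2 x h3 h0 g hg; linarith
    · rintro x ⟨h1, h2, h3⟩
      refine ⟨by rw [cb_length _ _ _ (by omega), h1], by rw [cb_drop _ _ _ _ hv (by omega), h2], ?_⟩
      intro g hg
      rw [ev_cb']
      rcases le_total 0 (ev n x) with h0 | h0
      · rw [min_eq_left h0]; simpa using i3 x h3 h0 g hg
      · rw [min_eq_right h0]; have := i4 x h3 h0 g hg; linarith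
  exact Set.encard_congr (hb.equiv _)

lemma run_sound (k : List ℤ) (E : List (List ℤ)) :
    ∀ (st : List (List ℤ × List ℤ × ℕ × List (List ℕ))) (F : List (List ℤ)),
    run F st E = true → (Sol k F).encard = (Sol k E).encard
  | [], F, h => by
    simp only [run, decide_eq_true_eq] at h
    rw [h]
  | (v, n, q, cs) :: st, F, h => by
    rw [run, forceM_eq] at h
    simp only [Bool.and_eq_true, decide_eq_true_eq] at h
    rw [step_encard h.1.1.1 h.1.1.2 h.1.2 k]
    exact run_sound k E st _ h.2
/-- Coefficients of the inequalities defining `SigmaSet` (coordinates `p`, then `k`). -/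
def facA : List (List ℤ) :=
 [
  [0, 0, 0, 0, 0, 0, 0, 0, 0, 0, 0, -1, 1, 0, 0, 0],
  [0, 0, 0, 0, 0, 0, 0, 0, 0, 0, -1, 0, 0, 1, 0, 0],
  [0, 0, 0, 0, 0, 0, 0, 0, -1, 0, 0, 0, 0, 0, 1, 0],
  [0, 0, 0, -1, 0, 0, 0, 0, 0, 0, 0, 0, 0, 0, 0, 1],
  [0, 0, 0, 0, 0, 0, -1, 0, 0, 0, -1, -1, 1, 1, 0, 0],
  [0, 0, 0, 0, 0, 0, -1, -1, -1, -1, 0, -1, 1, 1, 1, 0],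
  [0, 0, 0, 0, 0, 0, -1, 0, -1, -1, -1, -1, 1, 1, 1, 0],
  [0, 0, 0, 0, 0, 0, 0, 0, -1, -1, -1, 0, 0, 1, 1, 0],
  [0, 0, 0, -1, -1, -1, -1, 0, 0, 0, 0, -1, 1, 1, 0, 1],
  [0, 0, 0, -1, -1, 0, -1, 0, 0, 0, -1, -1, 1, 1, 0, 1],
  [0, 0, 0, -1, -1, 0, 0, 0, 0, 0, -1, 0, 0, 1, 0, 1],
  [0, -1, 0, -1, -1, 0, 0, 0, -1, -1, 0, 0, 0, 1, 1, 1],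
  [0, 0, 0, -1, -1, 0, 0, 0, -1, -1, -1, 0, 0, 1, 1, 1],
  [0, 0, -1, -1, -1, -1, -1, 0, -1, 0, 0, -1, 1, 1, 1, 1],
  [0, -1, -1, -1, -1, 0, -1, 0, -1, 0, 0, -1, 1, 1, 1, 1],
  [0, -1, -1, -1, 0, 0, -1, -1, -1, 0, 0, -1, 1, 1, 1, 1],
  [0, -1, 0, -1, 0, 0, -1, -1, -1, -1, 0, -1, 1, 1, 1, 1],
  [0, 0, 0, -1, -1, 0, -1, 0, -1, -1, -1, -1, 1, 1, 1, 1],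
  [0, -1, 0, -1, -1, 0, -1, 0, -1, -1, 0, -1, 1, 1, 1, 1],
  [-1, 0, -1, -1, -1, -1, -1, -1, -1, 0, -1, 0, 1, 2, 1, 1],
  [-1, -1, -1, -1, -1, 0, -1, -1, -1, 0, -1, 0, 1, 2, 1, 1],
  [0, 0, -1, -1, -1, -1, -1, -1, -1, 0, -1, -1, 1, 2, 1, 1],
  [0, -1, -1, -1, -1, 0, -1, -1, -1, 0, -1, -1, 1, 2, 1, 1],
  [-1, -1, 0, -1, -1, 0, -1, -1, -1, -1, -1, 0, 1, 2, 1, 1]]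

/-- Continuation of `facA`. -/
def facB : List (List ℤ) :=
 [
  [0, -1, 0, -1, -1, 0, -1, -1, -1, -1, -1, -1, 1, 2, 1, 1],
  [-1, 0, 0, -1, -1, -1, -1, -1, -1, -1, -1, 0, 1, 2, 1, 1],
  [0, 0, 0, -1, -1, -1, -1, -1, -1, -1, -1, -1, 1, 2, 1, 1],
  [0, -1, -1, -1, -1, 0, -1, -1, -2, -1, -1, -1, 1, 2, 2, 1],
  [0, 0, -1, -1, -1, -1, -1, -1, -2, -1, -1, -1, 1, 2, 2, 1],
  [-1, -1, -1, -1, -1, 0, -1, -1, -2, -1, -1, 0, 1, 2, 2, 1],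
  [-1, 0, -1, -1, -1, -1, -1, -1, -2, -1, -1, 0, 1, 2, 2, 1],
  [0, -1, 0, -1, -1, 0, -1, -1, -2, -2, -1, -1, 1, 2, 2, 1],
  [0, -1, -1, -2, -1, -1, -1, -1, -1, 0, -1, -1, 1, 2, 1, 2],
  [0, -1, 0, -2, -1, -1, -1, -1, -1, -1, -1, -1, 1, 2, 1, 2],
  [-1, -1, -1, -2, -1, -1, -1, -1, -1, 0, -1, 0, 1, 2, 1, 2],
  [-1, -1, 0, -2, -1, -1, -1, -1, -1, -1, -1, 0, 1, 2, 1, 2],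
  [0, -1, -1, -2, -2, -1, -1, 0, -1, 0, -1, -1, 1, 2, 1, 2],
  [0, -1, 0, -2, -2, -1, -1, 0, -1, -1, -1, -1, 1, 2, 1, 2],
  [0, 0, -1, -1, -1, -1, -2, -1, -1, 0, -1, -2, 2, 2, 1, 1],
  [0, 0, 0, -1, -1, -1, -2, -1, -1, -1, -1, -2, 2, 2, 1, 1],
  [0, -1, -1, -1, -1, 0, -2, -1, -1, 0, -1, -2, 2, 2, 1, 1],
  [0, -1, 0, -1, -1, 0, -2, -1, -1, -1, -1, -2, 2, 2, 1, 1],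
  [-1, -1, -1, -2, -1, -1, -1, -1, -2, -1, -1, 0, 1, 2, 2, 2],
  [0, -1, -1, -2, -1, -1, -1, -1, -2, -1, -1, -1, 1, 2, 2, 2],
  [0, -1, -1, -2, -2, -1, -1, 0, -2, -1, -1, -1, 1, 2, 2, 2],
  [0, -1, -1, -2, -1, -1, -2, -1, -1, 0, -1, -2, 2, 2, 1, 2],
  [0, -1, 0, -2, -1, -1, -2, -1, -1, -1, -1, -2, 2, 2, 1, 2]]

/-- Continuation of `facB`. -/
def facC : List (List ℤ) :=
 [
  [0, -1, -1, -2, -2, -1, -2, 0, -1, 0, -1, -2, 2, 2, 1, 2],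
  [0, -1, 0, -2, -2, -1, -2, 0, -1, -1, -1, -2, 2, 2, 1, 2],
  [0, -1, -1, -1, -1, 0, -2, -1, -2, -1, -1, -2, 2, 2, 2, 1],
  [0, 0, -1, -1, -1, -1, -2, -1, -2, -1, -1, -2, 2, 2, 2, 1],
  [0, -1, 0, -1, -1, 0, -2, -1, -2, -2, -1, -2, 2, 2, 2, 1],
  [0, -1, -1, -2, -1, -1, -2, -1, -2, -1, -1, -2, 2, 2, 2, 2],
  [0, -1, -1, -2, -2, -1, -2, 0, -2, -1, -1, -2, 2, 2, 2, 2],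
  [0, -1, -1, -2, -2, -1, -1, -1, -1, 0, -2, -1, 1, 3, 1, 2],
  [0, -1, 0, -2, -2, -1, -1, -1, -1, -1, -2, -1, 1, 3, 1, 2],
  [-1, -1, -1, -2, -2, -1, -1, -1, -1, 0, -2, 0, 1, 3, 1, 2],
  [-1, -1, 0, -2, -2, -1, -1, -1, -1, -1, -2, 0, 1, 3, 1, 2],
  [-1, -1, 0, -2, -2, -1, -1, -1, -2, -2, -2, 0, 1, 3, 2, 2],
  [0, -1, 0, -2, -2, -1, -1, -1, -2, -2, -2, -1, 1, 3, 2, 2],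
  [-1, -1, 0, -2, -2, -1, -2, -1, -1, -1, -2, -1, 2, 3, 1, 2],
  [-1, -1, -1, -2, -2, -1, -2, -1, -1, 0, -2, -1, 2, 3, 1, 2],
  [-1, -1, 0, -2, -2, -1, -2, -1, -2, -2, -2, -1, 2, 3, 2, 2],
  [0, -1, -1, -2, -2, -1, -1, -1, -3, -2, -2, -1, 1, 3, 3, 2],
  [-1, -1, -1, -2, -2, -1, -1, -1, -3, -2, -2, 0, 1, 3, 3, 2],
  [0, -1, -1, -2, -2, -1, -3, -1, -1, 0, -2, -3, 3, 3, 1, 2],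
  [0, -1, 0, -2, -2, -1, -3, -1, -1, -1, -2, -3, 3, 3, 1, 2],
  [0, -1, -1, -2, -2, -1, -3, -1, -3, -2, -2, -3, 3, 3, 3, 2],
  [-1, -1, -1, -2, -2, -1, -2, -1, -3, -2, -2, -1, 2, 3, 3, 2],
  [0, -1, 0, -2, -2, -1, -3, -1, -2, -2, -2, -3, 3, 3, 2, 2]]

/-- Nonnegativity of the coordinates of `p`. -/
def facD : List (List ℤ) :=
 [
  [1, 0, 0, 0, 0, 0, 0, 0, 0, 0, 0, 0, 0, 0, 0, 0],
  [0, 1, 0, 0, 0, 0, 0, 0, 0, 0, 0, 0, 0, 0, 0, 0],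
  [0, 0, 1, 0, 0, 0, 0, 0, 0, 0, 0, 0, 0, 0, 0, 0],
  [0, 0, 0, 1, 0, 0, 0, 0, 0, 0, 0, 0, 0, 0, 0, 0],
  [0, 0, 0, 0, 1, 0, 0, 0, 0, 0, 0, 0, 0, 0, 0, 0],
  [0, 0, 0, 0, 0, 1, 0, 0, 0, 0, 0, 0, 0, 0, 0, 0],
  [0, 0, 0, 0, 0, 0, 1, 0, 0, 0, 0, 0, 0, 0, 0, 0],
  [0, 0, 0, 0, 0, 0, 0, 1, 0, 0, 0, 0, 0, 0, 0, 0],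
  [0, 0, 0, 0, 0, 0, 0, 0, 1, 0, 0, 0, 0, 0, 0, 0],
  [0, 0, 0, 0, 0, 0, 0, 0, 0, 1, 0, 0, 0, 0, 0, 0],
  [0, 0, 0, 0, 0, 0, 0, 0, 0, 0, 1, 0, 0, 0, 0, 0],
  [0, 0, 0, 0, 0, 0, 0, 0, 0, 0, 0, 1, 0, 0, 0, 0]]

/-- The system reached at the end of the chain of mutations. -/
def facEnd : List (List ℤ) :=
 [
  [0, 0, 0, 0, 0, 0, 0, 0, 0, 0, 0, -1, 1, 0, 0, 0],
  [0, 1, 1, -1, -1, -1, -1, 1, 0, 1, -1, -2, 2, 0, 0, 0],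
  [0, 1, 1, 0, -1, -1, -1, 1, 1, 1, -1, -2, 2, 0, -1, 0],
  [2, 3, 2, 4, 2, 1, 2, 2, 5, 3, 1, 0, -1, -4, -5, -3],
  [1, 1, 1, 2, 1, 1, 1, 1, 2, 1, 1, 0, 0, -2, -2, -2],
  [2, 3, 2, 5, 3, 2, 3, 2, 5, 3, 2, 1, -2, -5, -5, -4],
  [-1, -1, -1, -2, -2, -1, -2, -1, -2, -1, -2, -1, 2, 3, 2, 2],
  [-1, -1, -1, -1, -1, 0, -1, -1, -2, -1, -1, 0, 1, 2, 2, 1],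
  [-1, -1, -1, -2, -2, -1, -1, -1, -2, -1, -2, 0, 1, 3, 2, 2],
  [-1, -1, -1, -2, -2, -1, -2, -1, -3, -2, -2, -1, 2, 3, 3, 2],
  [-1, -1, -1, -2, -1, -1, -1, -1, -2, -1, -1, 0, 1, 2, 2, 2],
  [-1, -1, -1, -2, -1, -1, 0, -1, -2, -1, -1, 1, 0, 2, 2, 2],
  [0, 1, 0, 1, 1, 0, 1, 0, 1, 2, 1, 1, -1, -1, -1, -1],
  [0, -1, 0, -2, -2, -1, -2, 0, -1, -1, -1, -2, 2, 2, 1, 2],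
  [2, 1, 1, 2, 1, 1, 1, 1, 3, 1, 1, 0, -1, -2, -3, -1],
  [0, -1, 0, 1, 1, 1, 1, -1, 0, -1, 1, 1, -1, 0, 0, 0],
  [0, -1, 0, -1, -1, 0, -1, 0, -1, -1, 0, -1, 1, 1, 1, 1],
  [1, 1, 1, 2, 1, 1, 1, 1, 2, 1, 1, 0, -1, -2, -2, -1],
  [1, 1, 1, 2, 2, 1, 1, 1, 2, 1, 2, 0, -1, -2, -2, -2],
  [0, 0, 0, 0, 0, 0, 0, 1, 0, 0, 0, 0, 0, 0, 0, 0],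
  [0, -1, 0, 0, 1, 1, 1, -1, -1, -1, 1, 1, -1, 0, 1, 0],
  [2, 1, 1, 1, 1, 1, 1, 1, 2, 1, 1, 0, -1, -2, -2, -1],
  [2, 2, 2, 0, 0, 0, 0, 2, 2, 2, 0, -1, 0, -2, -2, -1],
  [0, 0, 0, 0, 0, 0, 0, 0, 1, 0, 0, 0, 0, 0, 0, 0],
  [1, 0, 1, 1, 2, 1, 2, 0, 2, 0, 2, 1, -2, -2, -1, -1],
  [2, 2, 2, 4, 4, 2, 3, 1, 5, 3, 4, 1, -3, -5, -4, -4],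
  [1, 1, 1, 2, 2, 1, 2, 1, 3, 2, 2, 1, -2, -3, -2, -2]]

def certOne : List (List ℕ) :=
 [
    [1, 0, 76, 1], [1, 0, 4, 1], [1, 0, 1, 1], [1, 1, 1, 1], [1, 0, 7, 1], [1, 1, 5, 1],
    [1, 0, 5, 1], [1, 0, 10, 1], [1, 1, 7, 1], [1, 0, 7, 1], [1, 0, 17, 1], [1, 0, 9, 1],
    [1, 1, 9, 1], [1, 0, 38, 1], [1, 0, 40, 1], [1, 0, 41, 1], [1, 0, 39, 1], [1, 0, 49, 1],
    [1, 0, 50, 1], [1, 0, 51, 1], [1, 0, 45, 1], [1, 0, 46, 1], [1, 0, 47, 1], [1, 0, 48, 1],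
    [1, 0, 17, 1], [1, 1, 17, 1], [1, 0, 22, 1], [1, 1, 22, 1], [1, 0, 18, 1], [1, 1, 18, 1],
    [1, 0, 20, 1], [1, 1, 20, 1], [1, 0, 52, 1], [1, 0, 53, 1], [1, 0, 28, 1], [1, 1, 28, 1],
    [1, 0, 29, 1], [1, 1, 29, 1], [1, 0, 32, 1]]

def certTwo : List (List ℕ) :=
 [
    [1, 1, 32, 1], [1, 0, 33, 1], [1, 1, 33, 1], [1, 0, 23, 1], [1, 1, 23, 1], [1, 0, 24, 1],
    [1, 1, 24, 1], [1, 0, 27, 1], [1, 1, 27, 1], [1, 0, 35, 1], [1, 1, 35, 1], [1, 0, 36, 1],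
    [1, 1, 36, 1], [1, 0, 65, 1], [1, 0, 66, 1], [1, 0, 61, 1], [1, 0, 60, 1], [1, 0, 62, 1],
    [1, 0, 69, 1], [1, 0, 40, 1], [1, 1, 40, 1], [1, 0, 39, 1], [1, 1, 39, 1], [1, 0, 41, 1],
    [1, 1, 41, 1], [1, 0, 67, 1], [1, 0, 68, 1], [1, 0, 37, 1], [1, 2, 37, 1], [1, 0, 38, 1],
    [1, 2, 38, 1], [1, 0, 43, 1], [1, 2, 43, 1], [1, 0, 44, 1], [1, 1, 44, 1], [1, 0, 42, 1],
    [1, 2, 42, 1], [1, 1, 0, 1], [1, 0, 0, 1]]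

def move1 : List ℤ × List ℤ × ℕ × List (List ℕ) :=
  ([0, 0, 0, 0, 0, 0, -1, 0, 0, 0, 1, 1], [0, 0, 0, 0, 0, 0, 1, 0, 0, 0, 0, 1, -1, 0, 0, 0],
   0xf5455500280aaa00002900a5a96a6695156451459,
   certOne ++ certTwo)

def move2 : List ℤ × List ℤ × ℕ × List (List ℕ) :=
  ([-1, 0, 0, 0, 0, 1, -1, 1, 0, 0, 1, 0], [1, 0, 0, 0, 0, 0, -1, 0, 0, 0, 0, -2, 1, 0, 0, 0],
   0x175f5588429150a46455175d55555,
   [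
    [1, 0, 17, 1], [1, 1, 17, 1], [1, 0, 17, 1], [1, 0, 22, 1], [1, 1, 22, 1], [1, 0, 22, 1],
    [1, 0, 26, 1], [1, 0, 24, 1], [1, 1, 24, 1], [1, 0, 30, 1], [1, 0, 31, 1], [1, 0, 27, 1],
    [1, 1, 27, 1], [1, 0, 28, 1], [1, 1, 28, 1], [1, 0, 35, 1], [1, 1, 31, 1], [1, 0, 31, 1],
    [1, 0, 39, 1], [1, 0, 40, 1], [1, 0, 33, 1], [1, 1, 33, 1], [1, 0, 34, 1], [1, 1, 34, 1],
    [1, 0, 42, 1], [1, 1, 35, 1], [1, 0, 35, 1], [1, 0, 44, 1], [1, 0, 36, 1], [1, 1, 36, 1],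
    [1, 0, 57, 1], [1, 0, 37, 1], [1, 1, 37, 1]])

def move3 : List ℤ × List ℤ × ℕ × List (List ℕ) :=
  ([0, 1, -1, 0, 0, 0, 0, 1, 0, -1, 0, 0], [0, 0, 1, 0, 0, 0, 0, 0, 0, -1, 0, 0, 0, 0, 0, 0],
   0x551f55b74754575055457d5d55,
   [
    [1, 0, 14, 1], [1, 1, 16, 1], [1, 0, 16, 1], [1, 0, 20, 1], [1, 0, 21, 1], [1, 1, 20, 1],
    [1, 0, 20, 1], [1, 1, 21, 1], [1, 0, 21, 1], [1, 0, 28, 1], [1, 1, 28, 1], [1, 0, 28, 1],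
    [1, 0, 34, 1], [1, 1, 34, 1], [1, 0, 34, 1], [1, 0, 47, 1], [1, 0, 41, 1], [1, 1, 41, 1]])

def move4 : List ℤ × List ℤ × ℕ × List (List ℕ) :=
  ([0, 0, -1, 0, 1, 0, 0, 1, 0, 0, -1, 0], [0, 1, 0, 1, 1, 0, 1, 0, 1, 1, 1, 1, -1, -1, -1, -1],
   0x101775d451114519655559559e5d,
   [
    [1, 0, 27, 1], [1, 0, 30, 1], [1, 0, 53, 1], [1, 0, 40, 1], [1, 0, 33, 1], [1, 0, 51, 1],
    [1, 0, 52, 1], [1, 0, 35, 1], [1, 0, 37, 1], [1, 0, 5, 1], [1, 1, 5, 1], [1, 0, 9, 1],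
    [1, 1, 9, 1], [1, 0, 15, 1], [1, 1, 15, 1], [1, 0, 24, 1], [1, 1, 24, 1], [1, 0, 27, 1],
    [1, 1, 27, 1], [1, 1, 13, 1], [1, 0, 13, 1], [1, 1, 19, 1], [1, 0, 19, 1], [1, 1, 20, 1],
    [1, 0, 20, 1], [1, 1, 11, 1], [1, 0, 11, 1]])

def move5 : List ℤ × List ℤ × ℕ × List (List ℕ) :=
  ([1, 0, 0, 0, 0, 0, 0, 0, 0, 0, 0, 0], [0, 0, 0, 0, 0, 0, 0, 0, 1, 1, 0, 0, 0, 0, -1, 0],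
   0x17f575555918066b5d55555555,
   [
    [1, 0, 26, 1], [1, 0, 28, 1], [1, 0, 27, 1], [1, 0, 23, 1], [1, 1, 23, 1], [1, 0, 26, 1],
    [1, 1, 26, 1], [1, 0, 24, 1], [1, 1, 24, 1], [1, 0, 31, 1], [1, 0, 28, 1], [1, 1, 28, 1],
    [2, 0, 33, 1, 34, 1], [1, 1, 33, 1]])

def move6 : List ℤ × List ℤ × ℕ × List (List ℕ) :=
  ([1, -1, 0, 1, 0, -1, 0, 0, 0, 0, 0, 0], [1, 1, 1, 1, 1, 1, 1, 1, 2, 1, 1, 0, -1, -2, -2, -1],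
   0x17ffd55174414457d7d5a655655,
   [
    [1, 0, 28, 1], [1, 0, 31, 1], [1, 0, 32, 1], [1, 0, 26, 1], [1, 0, 34, 1], [1, 0, 39, 1],
    [1, 0, 13, 1], [1, 1, 13, 1], [1, 0, 4, 1], [1, 1, 4, 1], [1, 0, 10, 1], [1, 1, 10, 1],
    [1, 0, 12, 1], [1, 1, 12, 1], [1, 1, 27, 1], [1, 0, 27, 1], [1, 1, 28, 1], [1, 0, 28, 1]])

def move7 : List ℤ × List ℤ × ℕ × List (List ℕ) :=
  ([0, -1, 0, 1, 0, -1, 0, 0, 0, 0, 0, 0], [0, 0, 0, 0, 0, 0, 0, 0, 1, 1, 0, 0, 0, 0, -1, 0],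
   0x51515155455d55545545555555555,
   [
    [1, 0, 20, 1], [1, 1, 18, 1], [1, 0, 18, 1], [1, 0, 26, 1], [1, 1, 23, 1], [1, 0, 23, 1],
    [1, 0, 40, 1], [1, 1, 38, 1], [1, 0, 38, 1], [1, 0, 47, 1], [1, 1, 43, 1], [1, 0, 43, 1],
    [1, 0, 51, 1], [1, 1, 46, 1], [1, 0, 46, 1], [1, 0, 55, 1], [1, 1, 49, 1], [1, 0, 49, 1]])

def move8 : List ℤ × List ℤ × ℕ × List (List ℕ) :=
  ([2, -1, 0, 1, 0, -2, 1, -1, 0, 0, -1, 0], [2, 1, 1, 1, 1, 1, 0, 1, 2, 1, 1, -2, 0, -2, -2, -1],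
   0x1514515457dd555154555555555,
   [
    [1, 0, 18, 1], [1, 1, 16, 1], [1, 0, 16, 1], [1, 0, 23, 1], [1, 1, 20, 1], [1, 0, 20, 1],
    [1, 0, 38, 1], [1, 1, 24, 1], [1, 0, 24, 1], [1, 0, 43, 1], [1, 0, 46, 1], [1, 0, 49, 1],
    [1, 1, 39, 1], [1, 0, 39, 1], [1, 1, 40, 1], [1, 0, 40, 1], [1, 1, 41, 1], [1, 0, 41, 1]])

def move9 : List ℤ × List ℤ × ℕ × List (List ℕ) :=
  ([0, 0, 1, 0, -1, 0, 0, -1, 0, 0, 1, 0], [0, 1, 0, 1, 1, 0, 1, 0, 1, 1, 1, 1, -1, -1, -1, -1],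
   0x55054455555557f55dddd1d45,
   [
    [1, 0, 2, 1], [1, 1, 1, 1], [1, 0, 1, 1], [1, 0, 7, 1], [1, 1, 6, 1], [1, 0, 6, 1],
    [1, 0, 38, 1], [1, 1, 43, 1], [1, 0, 43, 1], [1, 0, 40, 1], [1, 1, 44, 1], [1, 0, 44, 1],
    [1, 0, 44, 1], [1, 0, 45, 1], [1, 1, 46, 1], [1, 0, 46, 1], [1, 1, 47, 1], [1, 0, 47, 1]])

def move10 : List ℤ × List ℤ × ℕ × List (List ℕ) :=
  ([0, 1, 1, 0, -1, 0, 0, -1, 0, 0, 0, 0], [0, 1, 1, 1, 1, 0, 1, 1, 1, 0, 0, 1, -1, -1, -1, -1],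
   0x55041555555d55557dfd7f9d55,
   [
    [2, 0, 4, 1, 8, 1], [1, 1, 4, 1], [1, 0, 44, 1], [1, 0, 46, 1], [1, 0, 47, 1], [1, 0, 43, 1],
    [1, 1, 31, 1], [1, 0, 31, 1], [1, 1, 28, 1], [1, 0, 28, 1], [1, 1, 29, 1], [1, 0, 29, 1],
    [1, 1, 30, 1], [1, 0, 30, 1]])

def move11 : List ℤ × List ℤ × ℕ × List (List ℕ) :=
  ([-1, 1, 0, 0, -1, 1, 0, 0, 0, 0, 1, 0], [1, 0, 0, 1, 1, 1, 0, 0, 1, 1, 1, -1, 0, -1, -1, -1],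
   0x507555401544d2955540745569659,
   [
    [1, 0, 14, 1], [1, 0, 31, 1], [1, 0, 19, 1], [1, 0, 18, 1], [1, 0, 20, 1], [1, 0, 36, 1],
    [1, 0, 55, 1], [1, 0, 41, 1], [1, 0, 1, 1], [1, 1, 1, 1], [1, 0, 42, 1], [1, 0, 7, 1],
    [1, 1, 7, 1], [1, 0, 4, 1], [1, 1, 4, 1], [1, 0, 8, 1], [1, 1, 8, 1], [1, 0, 34, 1],
    [1, 0, 54, 1], [1, 0, 44, 1], [1, 0, 43, 1], [1, 1, 3, 1], [1, 0, 3, 1], [1, 1, 21, 1],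
    [1, 0, 21, 1], [1, 1, 9, 1], [1, 0, 9, 1], [1, 1, 13, 1], [1, 0, 13, 1], [1, 1, 17, 1],
    [1, 0, 17, 1], [1, 0, 27, 1], [1, 1, 27, 1], [1, 0, 26, 1], [1, 1, 26, 1], [1, 1, 22, 1],
    [1, 0, 22, 1], [1, 1, 10, 1], [1, 0, 10, 1]])

def move12 : List ℤ × List ℤ × ℕ × List (List ℕ) :=
  ([0, -1, -1, 0, 1, 0, 0, 1, 0, 0, 0, 0], [0, 1, 1, 1, 1, 0, 1, 1, 1, 0, 0, 1, -1, -1, -1, -1],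
   0x57555545755c451350448559,
   [
    [1, 0, 13, 1], [1, 0, 8, 1], [1, 0, 6, 1], [1, 1, 5, 1], [1, 0, 5, 1], [1, 0, 17, 1],
    [1, 2, 4, 1], [1, 0, 4, 1], [1, 0, 10, 1], [1, 1, 7, 1], [1, 0, 7, 1], [1, 0, 12, 1],
    [1, 1, 8, 1], [1, 0, 8, 1], [1, 0, 1, 1], [1, 1, 1, 1], [1, 0, 6, 1], [1, 1, 6, 1],
    [1, 0, 19, 1], [1, 2, 13, 1], [1, 0, 13, 1], [1, 0, 22, 1], [1, 1, 15, 1], [1, 0, 15, 1],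
    [1, 0, 24, 1], [1, 1, 16, 1], [1, 0, 16, 1], [1, 0, 34, 1], [1, 1, 27, 1], [1, 0, 27, 1]])

def move13 : List ℤ × List ℤ × ℕ × List (List ℕ) :=
  ([0, 1, -1, -1, 0, 1, 0, 0, 1, -1, 0, 0], [0, 0, 0, 1, 0, 0, 0, 0, 1, 0, 0, 0, 0, 0, -1, 0],
   0x755447555555555555555,
   [
    [1, 0, 32, 1], [1, 0, 34, 1], [1, 1, 2, 1], [1, 0, 2, 1], [1, 1, 32, 1], [1, 0, 32, 1]])

def move14 : List ℤ × List ℤ × ℕ × List (List ℕ) :=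
  ([0, -1, 1, 0, 0, 0, 0, -1, 0, 1, 0, 0], [0, 0, 1, 0, 0, 0, 0, 0, 0, -1, 0, 0, 0, 0, 0, 0],
   0x547775535d51499d54655,
   [
    [1, 0, 6, 1], [1, 0, 4, 1], [1, 1, 4, 1], [1, 0, 27, 1], [1, 0, 16, 1], [1, 0, 19, 1],
    [1, 1, 14, 1], [1, 0, 14, 1], [1, 0, 38, 1], [1, 0, 15, 1], [1, 1, 15, 1], [1, 0, 13, 1],
    [1, 1, 13, 1], [1, 1, 17, 1], [1, 0, 17, 1]])

def move15 : List ℤ × List ℤ × ℕ × List (List ℕ) :=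
  ([0, -1, 0, 0, 0, 0, 0, 1, 0, 0, 0, 0], [1, 0, 1, 1, 1, 1, 0, 0, 1, 0, 1, -1, 0, -1, -1, -1],
   0x155555555555ffd1577955,
   [
    [1, 0, 13, 1], [1, 0, 5, 1], [1, 1, 5, 1]])

def move16 : List ℤ × List ℤ × ℕ × List (List ℕ) :=
  ([0, -1, 0, 0, 1, 0, 0, 0, 0, 1, -1, 0], [0, 1, 0, 1, 1, 0, 1, 0, 1, 1, 1, 1, -1, -1, -1, -1],
   0x15dd75d544445555491145155,
   [
    [1, 0, 5, 1], [1, 1, 4, 1], [1, 0, 4, 1], [1, 0, 8, 1], [1, 0, 32, 1], [1, 1, 5, 1],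
    [1, 0, 5, 1], [1, 0, 11, 1], [1, 0, 13, 1], [1, 1, 7, 1], [1, 0, 7, 1], [1, 1, 8, 1],
    [1, 0, 8, 1], [1, 0, 16, 1], [1, 0, 11, 1], [1, 1, 11, 1], [1, 0, 30, 1], [1, 0, 26, 1],
    [1, 0, 28, 1], [1, 1, 19, 1], [1, 0, 19, 1], [1, 1, 20, 1], [1, 0, 20, 1], [1, 1, 12, 1],
    [1, 0, 12, 1], [1, 1, 6, 1], [1, 0, 6, 1]])

def move17 : List ℤ × List ℤ × ℕ × List (List ℕ) :=
  ([0, 0, 0, 0, -1, 0, 1, 0, 0, 0, 0, 0], [1, 2, 1, 3, 2, 1, 2, 1, 3, 2, 1, 1, -2, -3, -3, -2],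
   0x540040155d55555555d555,
   [
    [1, 0, 34, 1], [1, 0, 31, 1], [1, 0, 36, 1], [1, 0, 39, 1], [1, 0, 32, 1], [1, 0, 38, 1],
    [1, 0, 37, 1], [1, 0, 40, 1], [1, 0, 33, 1], [1, 1, 13, 1], [1, 0, 13, 1], [1, 1, 19, 1],
    [1, 0, 19, 1], [1, 1, 24, 1], [1, 0, 24, 1], [1, 1, 6, 1], [1, 0, 6, 1], [1, 1, 15, 1],
    [1, 0, 15, 1], [1, 1, 22, 1], [1, 0, 22, 1], [1, 1, 21, 1], [1, 0, 21, 1], [1, 1, 17, 1],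
    [1, 0, 17, 1], [1, 1, 23, 1], [1, 0, 23, 1]])

def move18 : List ℤ × List ℤ × ℕ × List (List ℕ) :=
  ([0, 1, 0, 0, 0, 0, 0, -1, 0, 0, 0, 0], [1, 0, 1, 1, 1, 1, 0, 0, 1, 0, 1, -1, 0, -1, -1, -1],
   0x155d5d5511111514555,
   [
    [1, 0, 6, 1], [1, 1, 5, 1], [1, 0, 5, 1], [1, 0, 9, 1], [1, 1, 6, 1], [1, 0, 6, 1],
    [1, 0, 13, 1], [1, 1, 10, 1], [1, 0, 10, 1], [1, 0, 15, 1], [1, 1, 11, 1], [1, 0, 11, 1],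
    [1, 0, 17, 1], [1, 1, 12, 1], [1, 0, 12, 1], [1, 0, 19, 1], [1, 1, 13, 1], [1, 0, 13, 1],
    [1, 0, 21, 1], [1, 1, 14, 1], [1, 0, 14, 1]])

def move19 : List ℤ × List ℤ × ℕ × List (List ℕ) :=
  ([-2, 3, -1, -2, -1, 3, 0, 0, 1, -1, 1, 0], [0, 1, 1, 2, 2, 1, 2, 0, 1, 1, 1, 2, -2, -2, -1, -2],
   0x5d04197555455565,
   [
    [1, 0, 10, 1], [1, 0, 27, 1], [1, 0, 2, 1], [1, 1, 2, 1], [1, 0, 24, 1], [1, 0, 26, 1],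
    [1, 0, 23, 1], [1, 0, 21, 1], [1, 1, 21, 1], [1, 1, 12, 1], [1, 0, 12, 1], [1, 1, 16, 1],
    [1, 0, 16, 1], [1, 1, 5, 1], [1, 0, 5, 1]])

def move20 : List ℤ × List ℤ × ℕ × List (List ℕ) :=
  ([1, -2, 0, 0, 2, -1, 0, 0, 0, 1, -2, 0], [0, 0, 0, 0, 0, 0, 1, 0, 0, 0, 0, 1, -1, 0, 0, 0],
   0x1545555035aa5dd,
   [
    [1, 0, 13, 1], [1, 0, 24, 1], [1, 0, 14, 1], [1, 0, 15, 1], [1, 0, 8, 1], [1, 1, 8, 1],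
    [1, 0, 10, 1], [1, 1, 10, 1], [1, 0, 11, 1], [1, 1, 11, 1], [1, 0, 9, 1], [1, 1, 9, 1]])

def move21 : List ℤ × List ℤ × ℕ × List (List ℕ) :=
  ([0, -1, 1, 0, 1, -1, 0, 0, 0, 0, 0, 0], [1, 0, 0, 0, 0, 0, 0, 1, 1, 1, 1, -1, 0, -1, -1, 0],
   0x5d555106d54595,
   [
    [1, 0, 14, 1], [1, 0, 15, 1], [1, 0, 6, 1], [1, 0, 3, 1], [1, 1, 3, 1], [1, 0, 17, 1],
    [1, 1, 1, 1], [1, 0, 1, 1], [1, 1, 2, 1], [1, 0, 2, 1], [1, 0, 12, 1], [1, 1, 12, 1]])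

def move22 : List ℤ × List ℤ × ℕ × List (List ℕ) :=
  ([1, -2, 0, 0, 3, -1, -1, 0, 0, 1, -2, 0], [1, 2, 1, 3, 2, 1, 2, 1, 3, 2, 1, 1, -2, -3, -3, -2],
   0x555517554575d,
   [
    [1, 0, 8, 1], [1, 1, 9, 1], [1, 0, 9, 1], [1, 0, 17, 1], [1, 1, 18, 1], [1, 0, 18, 1]])

def move23 : List ℤ × List ℤ × ℕ × List (List ℕ) :=
  ([0, 1, 1, 0, -1, -1, 1, -1, 0, -1, 1, 0], [2, 1, 1, 2, 2, 1, 1, 1, 3, 2, 3, -1, -1, -3, -3, -2],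
   0x15d5740265d555,
   [
    [1, 0, 15, 1], [1, 0, 16, 1], [1, 0, 13, 1], [1, 0, 14, 1], [1, 0, 11, 1], [1, 1, 11, 1],
    [1, 0, 13, 1], [1, 1, 13, 1], [1, 1, 1, 1], [1, 0, 1, 1], [1, 1, 2, 1], [1, 0, 2, 1]])

def move24 : List ℤ × List ℤ × ℕ × List (List ℕ) :=
  ([-1, 1, 0, 0, -1, 1, 1, 0, 0, 0, 0, -1], [1, 1, 1, 2, 1, 1, 1, 1, 2, 1, 1, 1, -1, -2, -2, -2],
   0x1555415555577,
   [
    [1, 0, 25, 1], [1, 0, 15, 1], [1, 0, 16, 1], [1, 1, 9, 1], [1, 0, 9, 1], [1, 1, 10, 1],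
    [1, 0, 10, 1], [1, 1, 7, 1], [1, 0, 7, 1]])

def move25 : List ℤ × List ℤ × ℕ × List (List ℕ) :=
  ([0, -1, 1, 0, 1, 0, 0, 0, 0, 0, -1, 0], [1, -1, 0, -1, 0, 0, 0, 0, 0, -1, 1, -1, 0, 0, 0, 1],
   0x15d1755655555,
   [
    [1, 0, 19, 1], [1, 0, 10, 1], [1, 1, 10, 1]])

def move26 : List ℤ × List ℤ × ℕ × List (List ℕ) :=
  ([2, -3, 1, 2, 1, -3, 0, 0, -1, 1, -1, 0], [0, 1, 1, 2, 2, 1, 2, 0, 1, 1, 1, 2, -2, -2, -1, -2],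
   0x5517455d55555,
   [
    [1, 0, 16, 1], [1, 1, 14, 1], [1, 0, 14, 1], [1, 0, 21, 1], [1, 1, 21, 1], [1, 0, 21, 1]])

def move27 : List ℤ × List ℤ × ℕ × List (List ℕ) :=
  ([2, -2, 0, 1, 1, -1, 0, 0, -1, 1, -1, 0], [0, 0, 0, 1, 0, 0, 0, 0, 1, 0, 0, 0, 0, 0, -1, 0],
   0x155ed55555555,
   [
    [2, 0, 19, 1, 22, 1], [1, 1, 19, 1], [1, 0, 25, 1], [1, 1, 23, 1], [1, 0, 23, 1]])

def move28 : List ℤ × List ℤ × ℕ × List (List ℕ) :=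
  ([0, 0, 0, 0, 0, -1, 1, 0, 0, 0, 0, -1], [2, 3, 2, 4, 2, 1, 2, 2, 5, 3, 1, 1, -2, -4, -5, -3],
   0x15505545d55657,
   [
    [1, 0, 14, 1], [1, 0, 5, 1], [1, 1, 5, 1], [1, 0, 20, 1], [1, 0, 21, 1], [1, 1, 18, 1],
    [1, 0, 18, 1], [1, 1, 19, 1], [1, 0, 19, 1]])

def move29 : List ℤ × List ℤ × ℕ × List (List ℕ) :=
  ([1, 1, -1, -1, 0, 1, 0, 0, 0, 0, 0, 0], [0, 1, 1, -1, -1, -1, -1, 1, 0, 1, -1, -1, 1, 0, 0, 0],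
   0x55d1565555555,
   [
    [1, 0, 19, 1], [1, 0, 14, 1], [1, 1, 14, 1]])

def move30 : List ℤ × List ℤ × ℕ × List (List ℕ) :=
  ([-1, 2, 0, 0, -3, 1, 1, 0, 0, -1, 2, 0], [1, 2, 1, 3, 2, 1, 2, 1, 3, 2, 1, 1, -2, -3, -3, -2],
   0x55555d5515475,
   [
    [1, 0, 4, 1], [1, 1, 4, 1], [1, 0, 4, 1], [1, 0, 9, 1], [1, 1, 8, 1], [1, 0, 8, 1]])

def move31 : List ℤ × List ℤ × ℕ × List (List ℕ) :=
  ([-1, 0, 0, 0, 0, 0, 1, 0, 0, 0, 0, -1], [0, 1, 1, -1, -1, -1, -1, 1, 0, 1, -1, -1, 1, 0, 0, 0],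
   0x5591556555557,
   [
    [1, 0, 19, 1], [1, 0, 13, 1], [1, 1, 13, 1], [2, 0, 20, 1, 21, 1], [1, 1, 20, 1]])

def move32 : List ℤ × List ℤ × ℕ × List (List ℕ) :=
  ([-1, 0, 1, 0, 0, 0, 0, 0, 0, 0, 0, 0], [0, 0, 0, 1, 0, 0, 0, 0, 1, 0, 0, 0, 0, 0, -1, 0],
   0x555555955555d,
   [
    [2, 0, 13, 1, 20, 1], [1, 1, 13, 1]])

/-- The chain of mutations (direction, wall, surviving facets, certificates). -/
def chain : List (List ℤ × List ℤ × ℕ × List (List ℕ)) :=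
 [
  move1, move2, move3, move4, move5, move6, move7, move8, move9, move10, move11, move12, move13,
  move14, move15, move16, move17, move18, move19, move20, move21, move22, move23, move24, move25,
  move26, move27, move28, move29, move30, move31, move32]

lemma chain_ok : run (facA ++ facB ++ facC ++ facD) chain facEnd = true := by decide +kernel
lemma PosOn_append (A B : List (List ℤ)) (x : List ℤ) :
    PosOn (A ++ B) x ↔ PosOn A x ∧ PosOn B x := by
  simp only [PosOn, List.mem_append, or_imp, forall_and]

/-- The coordinate list attached to `k` and `p`. -/
def toL (k : Fin 4 → ℤ) (p : Fin 12 → ℤ) : List ℤ :=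
  [p 0, p 1, p 2, p 3, p 4, p 5, p 6, p 7, p 8, p 9, p 10, p 11, k 0, k 1, k 2, k 3]

lemma pos_D (k : Fin 4 → ℤ) (p : Fin 12 → ℤ) : PosOn facD (toL k p) ↔ ∀ j, 0 ≤ p j := by
  simp only [PosOn, facD, toL, List.forall_mem_cons, ev, List.not_mem_nil, IsEmpty.forall_iff,
    implies_true, and_true, zero_mul, one_mul, zero_add, add_zero]
  constructor
  · rintro ⟨h0, h1, h2, h3, h4, h5, h6, h7, h8, h9, h10, h11⟩ j
    fin_cases j <;> assumption
  · intro h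
    refine ⟨h _, h _, h _, h _, h _, h _, h _, h _, h _, h _, h _, h _⟩

lemma pos_ABC (k : Fin 4 → ℤ) (p : Fin 12 → ℤ) :
    PosOn (facA ++ facB ++ facC) (toL k p) ↔ SatisfiesIneqs k p := by
  simp only [PosOn, facA, facB, facC, List.cons_append, List.nil_append, List.forall_mem_cons,
    List.not_mem_nil, IsEmpty.forall_iff, implies_true, and_true, SatisfiesIneqs]
  iterate 69 refine and_congr (by simp only [toL, ev, zero_mul, zero_add]; omega) ?_
  simp only [toL, ev, zero_mul, zero_add]; omega

lemma len16 (x : List ℤ) (h : x.length = 16) : ∃ a0 a1 a2 a3 a4 a5 a6 a7 a8 a9 a10 a11 a12 a13 a14 a15,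
    x = [a0, a1, a2, a3, a4, a5, a6, a7, a8, a9, a10, a11, a12, a13, a14, a15] := by
  match x, h with
  | [a0, a1, a2, a3, a4, a5, a6, a7, a8, a9, a10, a11, a12, a13, a14, a15], _ =>
    exact ⟨_, _, _, _, _, _, _, _, _, _, _, _, _, _, _, _, rfl⟩

lemma start_link (k : Fin 4 → ℤ) : (SigmaSet k).encard =
    (Sol [k 0, k 1, k 2, k 3] (facA ++ facB ++ facC ++ facD)).encard := by
  have hi : Function.Injective (toL k) := by
    intro p q h
    simp only [toL, List.cons.injEq, and_true] at h
    obtain ⟨h0, h1, h2, h3, h4, h5, h6, h7, h8, h9, h10, h11⟩ := h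
    funext j
    fin_cases j <;> assumption
  rw [← hi.encard_image]
  congr 1
  ext x
  constructor
  · rintro ⟨p, ⟨h1, h2⟩, rfl⟩
    exact ⟨rfl, rfl, (PosOn_append _ _ _).2 ⟨(pos_ABC k p).2 h2, (pos_D k p).2 h1⟩⟩
  · rintro ⟨h1, h2, h3⟩
    obtain ⟨a0, a1, a2, a3, a4, a5, a6, a7, a8, a9, a10, a11, a12, a13, a14, a15, rfl⟩ := len16 x h1
    simp only [List.drop_succ_cons, List.drop_zero, List.cons.injEq, and_true] at h2
    obtain ⟨rfl, rfl, rfl, rfl⟩ := h2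
    obtain ⟨h3, h4⟩ := (PosOn_append _ _ _).1 h3
    exact ⟨![a0, a1, a2, a3, a4, a5, a6, a7, a8, a9, a10, a11],
      ⟨(pos_D k _).1 h4, (pos_ABC k _).1 h3⟩, rfl⟩

lemma tele (Q P : ℤ → ℚ) (hQ : ∀ x, Q (x + 1) - Q x = P x) (a : ℤ) : ∀ n : ℕ,
    ∑ x ∈ Finset.Icc a (a + n - 1), P x = Q (a + n) - Q a
  | 0 => by simp
  | n + 1 => by
    have h : Finset.Icc a (a + ((n + 1 : ℕ) : ℤ) - 1) = insert (a + n) (Finset.Icc a (a + n - 1)) := by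
      ext x; simp only [Finset.mem_insert, Finset.mem_Icc]; push_cast; omega
    rw [h, Finset.sum_insert (by simp), tele Q P hQ a n, ← hQ]
    push_cast
    rw [add_assoc]; ring

lemma tele' (Q P : ℤ → ℚ) (hQ : ∀ x, Q (x + 1) - Q x = P x) (a b : ℤ) (h : a ≤ b + 1) :
    ∑ x ∈ Finset.Icc a b, P x = Q (b + 1) - Q a := by
  have := tele Q P hQ a (b + 1 - a).toNat
  rw [Int.toNat_of_nonneg (by omega)] at this
  rwa [show a + (b + 1 - a) - 1 = b by ring, show a + (b + 1 - a) = b + 1 by ring] at this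

def E0 (u : ℚ) : ℚ := u / 2
def E1 (u : ℚ) : ℚ := (u ^ 3 - u) / 6
def E2 (u : ℚ) : ℚ := u ^ 5 / 10 - u ^ 3 / 3 + 7 * u / 30
def O0 (u : ℚ) : ℚ := u ^ 2 / 4
def O1 (u : ℚ) : ℚ := (u ^ 4 - 2 * u ^ 2) / 8
def O2 (u : ℚ) : ℚ := (u ^ 6 - 5 * u ^ 4 + 7 * u ^ 2) / 12

/-- Antiderivative for even polynomials. -/
def evenQ (A B C u : ℚ) : ℚ :=
  A * (u / 2) + B * ((u ^ 3 - u) / 6) + C * (u ^ 5 / 10 - u ^ 3 / 3 + 7 * u / 30)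

/-- Antiderivative for odd polynomials. -/
def oddQ (A B C u : ℚ) : ℚ :=
  A * (u ^ 2 / 4) + B * ((u ^ 4 - 2 * u ^ 2) / 8) + C * ((u ^ 6 - 5 * u ^ 4 + 7 * u ^ 2) / 12)

lemma even_sum (P : ℤ → ℚ) (t A B C : ℚ) (a b : ℤ) (h : a ≤ b + 1)
    (hP : ∀ x : ℤ, P x = A + B * (2 * x + t) ^ 2 + C * (2 * x + t) ^ 4) :
    ∑ x ∈ Finset.Icc a b, P x = evenQ A B C (2 * b + t + 1) - evenQ A B C (2 * a + t - 1) := by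
  rw [tele' (fun x : ℤ => evenQ A B C (2 * x + t - 1)) P ?_ a b h]
  · simp only [evenQ]; push_cast; ring
  · intro x; rw [hP]; simp only [evenQ]; push_cast; ring

lemma odd_sum (P : ℤ → ℚ) (t A B C : ℚ) (a b : ℤ) (h : a ≤ b + 1)
    (hP : ∀ x : ℤ, P x = A * (2 * x + t) + B * (2 * x + t) ^ 3 + C * (2 * x + t) ^ 5) :
    ∑ x ∈ Finset.Icc a b, P x = oddQ A B C (2 * b + t + 1) - oddQ A B C (2 * a + t - 1) := by
  rw [tele' (fun x : ℤ => oddQ A B C (2 * x + t - 1)) P ?_ a b h]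
  · simp only [oddQ]; push_cast; ring
  · intro x; rw [hP]; simp only [oddQ]; push_cast; ring

/-- The lower bound `max y (-y-s)` can be replaced by `y` for odd sums. -/
lemma oddQ_max (A B C s : ℚ) (S y : ℤ) (hs : s = S) :
    oddQ A B C (2 * ((max y (-y - S) : ℤ) : ℚ) + (s + 1) - 1) = oddQ A B C (2 * y + s) := by
  subst hs
  rcases max_choice y (-y - S) with h | h <;> rw [h] <;> simp only [oddQ] <;> push_cast <;> ring

def wD2 (x y : ℚ) : ℚ := (x ^ 2 - y ^ 2) / 4
def wB2 (x y : ℚ) : ℚ := x * y * (x ^ 2 - y ^ 2) / 24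
def wD3 (x y z : ℚ) : ℚ := (x ^ 2 - y ^ 2) * (x ^ 2 - z ^ 2) * (y ^ 2 - z ^ 2) / 768
def wB3 (x y z : ℚ) : ℚ :=
  x * y * z * ((x ^ 2 - y ^ 2) * (x ^ 2 - z ^ 2) * (y ^ 2 - z ^ 2)) / 46080
def wD4 (x y z w : ℚ) : ℚ := (x ^ 2 - y ^ 2) * (x ^ 2 - z ^ 2) * (x ^ 2 - w ^ 2) *
  (y ^ 2 - z ^ 2) * (y ^ 2 - w ^ 2) * (z ^ 2 - w ^ 2) / 17694720

open Finset in
noncomputable def cD2 (s b1 b2 : ℤ) : ℕ := ∑ c ∈ Icc (max b2 (-b2 - s)) b1, #(Icc (-c - s) c)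
open Finset in
noncomputable def cB2 (s a1 a2 : ℤ) : ℕ := ∑ b1 ∈ Icc a2 a1, ∑ b2 ∈ Icc (-a2 - s) a2, cD2 s b1 b2
open Finset in
noncomputable def cD3 (s n1 n2 n3 : ℤ) : ℕ := ∑ a1 ∈ Icc n2 n1, ∑ a2 ∈ Icc (max n3 (-n3 - s)) n2, cB2 s a1 a2
open Finset in
noncomputable def cB3 (s m1 m2 m3 : ℤ) : ℕ :=
  ∑ n1 ∈ Icc m2 m1, ∑ n2 ∈ Icc m3 m2, ∑ n3 ∈ Icc (-m3 - s) m3, cD3 s n1 n2 n3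
open Finset in
noncomputable def cD4 (s l1 l2 l3 l4 : ℤ) : ℕ :=
  ∑ m1 ∈ Icc l2 l1, ∑ m2 ∈ Icc l3 l2, ∑ m3 ∈ Icc (max l4 (-l4 - s)) l3, cB3 s m1 m2 m3

lemma cD2_eq (s b1 b2 : ℤ) (h : max b2 (-b2 - s) ≤ b1) :
    (cD2 s b1 b2 : ℚ) = wD2 (2 * b1 + s + 2) (2 * b2 + s) := by
  rw [cD2, Nat.cast_sum]
  have e : ∀ c ∈ Finset.Icc (max b2 (-b2 - s)) b1,
      ((Finset.Icc (-c - s) c).card : ℚ) = 2 * c + s + 1 := by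
    intro c hc
    rw [Finset.mem_Icc] at hc
    have : ((Finset.Icc (-c - s) c).card : ℤ) = 2 * c + s + 1 := by
      rw [Int.card_Icc, Int.toNat_of_nonneg (by omega)]; ring
    exact_mod_cast this
  rw [Finset.sum_congr rfl e, odd_sum _ (s + 1) 1 0 0 _ _ (by omega) (by intro x; ring),
    oddQ_max _ _ _ _ _ _ rfl]
  simp only [oddQ, wD2]; ring

lemma cB2_eq (s a1 a2 : ℤ) (h : a2 ≤ a1) (h' : 0 ≤ 2 * a2 + s) :
    (cB2 s a1 a2 : ℚ) = wB2 (2 * a1 + s + 3) (2 * a2 + s + 1) := by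
  simp only [cB2, Nat.cast_sum]
  have e : ∀ b1 ∈ Finset.Icc a2 a1, ∑ b2 ∈ Finset.Icc (-a2 - s) a2, (cD2 s b1 b2 : ℚ) =
      evenQ ((2 * b1 + s + 2) ^ 2 / 4) (-1 / 4) 0 (2 * a2 + s + 1) -
      evenQ ((2 * b1 + s + 2) ^ 2 / 4) (-1 / 4) 0 (-(2 * a2 + s + 1)) := by
    intro b1 hb1
    rw [Finset.mem_Icc] at hb1
    rw [Finset.sum_congr rfl fun b2 hb2 => cD2_eq s b1 b2 (by rw [Finset.mem_Icc] at hb2; omega),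
      even_sum _ s ((2 * b1 + s + 2) ^ 2 / 4) (-1 / 4) 0 _ _ (by omega)
        (by intro x; simp only [wD2]; ring)]
    congr 2; push_cast; ring
  rw [Finset.sum_congr rfl e]
  rw [even_sum _ (s + 2) (-((2 * a2 + s + 1) ^ 3 - (2 * a2 + s + 1)) / 12)
    ((2 * a2 + s + 1) / 4) 0 _ _ (by omega) (by intro x; simp only [evenQ]; ring)]
  simp only [evenQ, wB2]; ring

lemma cD3_eq (s n1 n2 n3 : ℤ) (h : n2 ≤ n1) (h' : max n3 (-n3 - s) ≤ n2) :
    (cD3 s n1 n2 n3 : ℚ) = wD3 (2 * n1 + s + 4) (2 * n2 + s + 2) (2 * n3 + s) := by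
  simp only [cD3, Nat.cast_sum]
  have e : ∀ a1 ∈ Finset.Icc n2 n1,
      ∑ a2 ∈ Finset.Icc (max n3 (-n3 - s)) n2, (cB2 s a1 a2 : ℚ) =
      oddQ ((2 * a1 + s + 3) ^ 3 / 24) (-(2 * a1 + s + 3) / 24) 0 (2 * n2 + s + 2) -
      oddQ ((2 * a1 + s + 3) ^ 3 / 24) (-(2 * a1 + s + 3) / 24) 0 (2 * n3 + s) := by
    intro a1 ha1
    rw [Finset.mem_Icc] at ha1
    rw [Finset.sum_congr rfl fun a2 ha2 => cB2_eq s a1 a2 (by rw [Finset.mem_Icc] at ha2; omega)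
        (by rw [Finset.mem_Icc] at ha2; omega),
      odd_sum _ (s + 1) ((2 * a1 + s + 3) ^ 3 / 24) (-(2 * a1 + s + 3) / 24) 0 _ _ (by omega)
        (by intro x; simp only [wB2]; ring), oddQ_max _ _ _ _ _ _ rfl]
    congr 2; ring
  rw [Finset.sum_congr rfl e]
  rw [odd_sum _ (s + 3)
    (-(oddQ 0 1 0 (2 * n2 + s + 2) - oddQ 0 1 0 (2 * n3 + s)) / 24)
    ((oddQ 1 0 0 (2 * n2 + s + 2) - oddQ 1 0 0 (2 * n3 + s)) / 24) 0 _ _ (by omega)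
    (by intro x; simp only [oddQ]; ring)]
  simp only [oddQ, wD3]; ring

lemma det_E (x y z : ℚ) :
    (E1 z * (E2 y - E2 z) - E2 z * (E1 y - E1 z)) / 384 * (E0 x - E0 y) +
    (E2 z * (E0 y - E0 z) - E0 z * (E2 y - E2 z)) / 384 * (E1 x - E1 y) +
    (E0 z * (E1 y - E1 z) - E1 z * (E0 y - E0 z)) / 384 * (E2 x - E2 y) = wB3 x y z := by
  simp only [E0, E1, E2, wB3]; ring

lemma det_O (x y z w : ℚ) :
    ((O1 z - O1 w) * (O2 y - O2 z) - (O2 z - O2 w) * (O1 y - O1 z)) / 46080 * (O0 x - O0 y) +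
    ((O2 z - O2 w) * (O0 y - O0 z) - (O0 z - O0 w) * (O2 y - O2 z)) / 46080 * (O1 x - O1 y) +
    ((O0 z - O0 w) * (O1 y - O1 z) - (O1 z - O1 w) * (O0 y - O0 z)) / 46080 * (O2 x - O2 y)
      = wD4 x y z w := by
  simp only [O0, O1, O2, wD4]; ring

lemma E_neg (z : ℚ) : E0 (-z) = -E0 z ∧ E1 (-z) = -E1 z ∧ E2 (-z) = -E2 z := by
  simp only [E0, E1, E2]; refine ⟨?_, ?_, ?_⟩ <;> ring

lemma even_sum' (P : ℤ → ℚ) (t A B C u v : ℚ) (a b : ℤ) (h : a ≤ b + 1)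
    (hu : 2 * b + t + 1 = u) (hv : 2 * a + t - 1 = v)
    (hP : ∀ x ∈ Finset.Icc a b, P x = A + B * (2 * x + t) ^ 2 + C * (2 * x + t) ^ 4) :
    ∑ x ∈ Finset.Icc a b, P x = A * (E0 u - E0 v) + B * (E1 u - E1 v) + C * (E2 u - E2 v) := by
  rw [Finset.sum_congr rfl hP, even_sum _ t A B C a b h (fun _ => rfl), hu, hv]
  simp only [evenQ, E0, E1, E2]; ring

lemma odd_sum' (P : ℤ → ℚ) (t A B C u v : ℚ) (a b : ℤ) (h : a ≤ b + 1)
    (hu : 2 * b + t + 1 = u) (hv : 2 * a + t - 1 = v)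
    (hP : ∀ x ∈ Finset.Icc a b, P x = A * (2 * x + t) + B * (2 * x + t) ^ 3 + C * (2 * x + t) ^ 5) :
    ∑ x ∈ Finset.Icc a b, P x = A * (O0 u - O0 v) + B * (O1 u - O1 v) + C * (O2 u - O2 v) := by
  rw [Finset.sum_congr rfl hP, odd_sum _ t A B C a b h (fun _ => rfl), hu, hv]
  simp only [oddQ, O0, O1, O2]; ring

/-- Version of `odd_sum'` with lower end a maximum. -/
lemma odd_sum_max (P : ℤ → ℚ) (S : ℤ) (A B C u v : ℚ) (a b : ℤ) (h : max a (-a - S) ≤ b + 1)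
    (hu : 2 * b + S + 2 = u) (hv : 2 * (a : ℚ) + S = v)
    (hP : ∀ x ∈ Finset.Icc (max a (-a - S)) b,
      P x = A * (2 * x + S + 1) + B * (2 * x + S + 1) ^ 3 + C * (2 * x + S + 1) ^ 5) :
    ∑ x ∈ Finset.Icc (max a (-a - S)) b, P x =
      A * (O0 u - O0 v) + B * (O1 u - O1 v) + C * (O2 u - O2 v) := by
  rw [odd_sum' P (S + 1) A B C u (2 * ((max a (-a - S) : ℤ) : ℚ) + (S + 1) - 1) _ b h
    (by rw [← hu]; ring) rfl (fun x hx => by rw [hP x hx]; ring)]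
  have := oddQ_max A B C S S a rfl
  rw [hv] at this
  simp only [oddQ] at this
  simp only [O0, O1, O2]
  linear_combination -this

lemma cB3_eq (s m1 m2 m3 : ℤ) (h : m2 ≤ m1) (h' : m3 ≤ m2) (h'' : 0 ≤ 2 * m3 + s) :
    (cB3 s m1 m2 m3 : ℚ) = wB3 (2 * m1 + s + 5) (2 * m2 + s + 3) (2 * m3 + s + 1) := by
  simp only [cB3, Nat.cast_sum]
  obtain ⟨z, hz⟩ : ∃ z : ℚ, 2 * m3 + s + 1 = z := ⟨_, rfl⟩
  obtain ⟨y, hy⟩ : ∃ z : ℚ, 2 * m2 + s + 3 = z := ⟨_, rfl⟩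
  obtain ⟨x, hx⟩ : ∃ z : ℚ, 2 * m1 + s + 5 = z := ⟨_, rfl⟩
  rw [hx, hy, hz, ← det_E]
  obtain ⟨n0, n1, n2⟩ := E_neg z
  refine even_sum' _ (s + 4) _ _ _ _ _ _ _ (by omega) (by rw [← hx]; ring) (by rw [← hy]; ring) ?_
  intro i hi
  rw [Finset.mem_Icc] at hi
  generalize hX : 2 * (i : ℚ) + (s + 4) = X
  trans ((-X ^ 4 * E1 z + X ^ 2 * E2 z) / 384) * (E0 y - E0 z) +
    ((X ^ 4 * E0 z - E2 z) / 384) * (E1 y - E1 z) +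
    ((-X ^ 2 * E0 z + E1 z) / 384) * (E2 y - E2 z)
  · refine even_sum' _ (s + 2) _ _ _ _ _ _ _ (by omega) (by rw [← hy]; ring)
      (by rw [← hz]; ring) ?_
    intro j hj
    rw [Finset.mem_Icc] at hj
    generalize hY : 2 * (j : ℚ) + (s + 2) = Y
    trans (X ^ 2 * Y ^ 2 * (X ^ 2 - Y ^ 2) / 768) * (E0 z - E0 (-z)) +
      (-(X ^ 4 - Y ^ 4) / 768) * (E1 z - E1 (-z)) + ((X ^ 2 - Y ^ 2) / 768) * (E2 z - E2 (-z))
    · refine even_sum' _ s _ _ _ _ _ _ _ (by omega) (by rw [← hz])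
        (by rw [← hz]; push_cast; ring) ?_
      intro l hl
      rw [Finset.mem_Icc] at hl
      rw [cD3_eq s i j l (by omega) (by omega), show (2 * (i : ℚ) + s + 4) = X by rw [← hX]; ring,
        show (2 * (j : ℚ) + s + 2) = Y by rw [← hY]; ring]
      generalize (2 * (l : ℚ) + s) = Z
      simp only [wD3]; ring
    · rw [n0, n1, n2]; ring
  · ring

lemma cD4_eq (s l1 l2 l3 l4 : ℤ) (h : l2 ≤ l1) (h' : l3 ≤ l2) (h'' : max l4 (-l4 - s) ≤ l3) :
    (cD4 s l1 l2 l3 l4 : ℚ) =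
      wD4 (2 * l1 + s + 6) (2 * l2 + s + 4) (2 * l3 + s + 2) (2 * l4 + s) := by
  simp only [cD4, Nat.cast_sum]
  obtain ⟨w, hw⟩ : ∃ z : ℚ, 2 * l4 + s = z := ⟨_, rfl⟩
  obtain ⟨z, hz⟩ : ∃ z : ℚ, 2 * l3 + s + 2 = z := ⟨_, rfl⟩
  obtain ⟨y, hy⟩ : ∃ z : ℚ, 2 * l2 + s + 4 = z := ⟨_, rfl⟩
  obtain ⟨x, hx⟩ : ∃ z : ℚ, 2 * l1 + s + 6 = z := ⟨_, rfl⟩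
  rw [hx, hy, hz, hw, ← det_O]
  refine odd_sum' _ (s + 5) _ _ _ _ _ _ _ (by omega) (by rw [← hx]; ring) (by rw [← hy]; ring) ?_
  intro i hi
  rw [Finset.mem_Icc] at hi
  generalize hX : 2 * (i : ℚ) + (s + 5) = X
  trans ((-X ^ 5 * (O1 z - O1 w) + X ^ 3 * (O2 z - O2 w)) / 46080) * (O0 y - O0 z) +
    ((X ^ 5 * (O0 z - O0 w) - X * (O2 z - O2 w)) / 46080) * (O1 y - O1 z) +
    ((-X ^ 3 * (O0 z - O0 w) + X * (O1 z - O1 w)) / 46080) * (O2 y - O2 z)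
  · refine odd_sum' _ (s + 3) _ _ _ _ _ _ _ (by omega) (by rw [← hy]; ring)
      (by rw [← hz]; ring) ?_
    intro j hj
    rw [Finset.mem_Icc] at hj
    generalize hY : 2 * (j : ℚ) + (s + 3) = Y
    trans (X * Y * (X ^ 2 * Y ^ 2 * (X ^ 2 - Y ^ 2)) / 46080) * (O0 z - O0 w) +
      (X * Y * -(X ^ 4 - Y ^ 4) / 46080) * (O1 z - O1 w) +
      (X * Y * (X ^ 2 - Y ^ 2) / 46080) * (O2 z - O2 w)
    · refine odd_sum_max _ s _ _ _ _ _ _ _ (by omega) hz hw ?_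
      intro l hl
      rw [Finset.mem_Icc] at hl
      rw [cB3_eq s i j l (by omega) (by omega) (by omega),
        show (2 * (i : ℚ) + s + 5) = X by rw [← hX]; ring,
        show (2 * (j : ℚ) + s + 3) = Y by rw [← hY]; ring]
      generalize (2 * (l : ℚ) + s + 1) = Z
      simp only [wB3]; ring
    · ring
  · ring

/-- Patterns, as iterated dependent pairs. -/
abbrev Pat : Type :=
  (_ : ℤ) × (_ : ℤ) × (_ : ℤ) × (_ : ℤ) × (_ : ℤ) × (_ : ℤ) × (_ : ℤ) × (_ : ℤ) × (_ : ℤ) × (_ : ℤ) × (_ : ℤ) × ℤ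

open Finset in
/-- The finite set of patterns. -/
noncomputable def patSet (s l1 l2 l3 l4 : ℤ) : Finset Pat :=
  (Icc l2 l1).sigma fun m1 => (Icc l3 l2).sigma fun m2 =>
  (Icc (max l4 (-l4 - s)) l3).sigma fun m3 =>
  (Icc m2 m1).sigma fun n1 => (Icc m3 m2).sigma fun n2 => (Icc (-m3 - s) m3).sigma fun n3 =>
  (Icc n2 n1).sigma fun a1 => (Icc (max n3 (-n3 - s)) n2).sigma fun a2 =>
  (Icc a2 a1).sigma fun b1 => (Icc (-a2 - s) a2).sigma fun b2 =>
  (Icc (max b2 (-b2 - s)) b1).sigma fun c => Icc (-c - s) c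

lemma card_patSet (s l1 l2 l3 l4 : ℤ) : (patSet s l1 l2 l3 l4).card = cD4 s l1 l2 l3 l4 := by
  unfold patSet
  iterate 11
    refine (Finset.card_sigma _ _).trans (Finset.sum_congr rfl fun _ _ => ?_)
  rfl

/-- The linear map from patterns to points. -/
def patMap (k : Fin 4 → ℤ) : Pat → List ℤ
  | ⟨m1, m2, m3, n1, n2, n3, a1, a2, b1, b2, c, d⟩ => [
    -m3 - a1 + a2 + b1 + b2 + k 2 + k 0,
    -2 * m1 + 2 * m3 + n1 - n2 + a1 - a2 - 2 * b1 + c + 2 * k 1 + k 3,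
    b1 - b2 - c + d,
    -a1 + a2 + b1 - c + k 2,
    m1 - m2 - 3 * m3 - n1 + n2 + n3 + b1,
    m3 + n2 + a1 - 2 * a2 - b1 + c - k 2 + k 3,
    m2 + m3 - n2 + c - d,
    m1 - n1,
    a1 - b1,
    m1 - m3 + n2 - a1 + b1 - k 1,
    -m1 + 2 * m3 + n1 - n2 - n3 - b1 + k 1,
    -c + d + k 0,
    k 0, k 1, k 2, k 3]

lemma patMap_inj (k : Fin 4 → ℤ) : Function.Injective (patMap k) := by
  rintro ⟨m1, m2, m3, n1, n2, n3, a1, a2, b1, b2, c, d⟩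
    ⟨m1', m2', m3', n1', n2', n3', a1', a2', b1', b2', c', d'⟩ h
  simp only [patMap, List.cons.injEq, and_true] at h
  obtain ⟨h0, h1, h2, h3, h4, h5, h6, h7, h8, h9, h10, h11⟩ := h
  have g0 : m1 = m1' := by linear_combination h0 + h1 + h2 + 2 * h3 + 2 * h4 + h5 + 2 * h6 + h7 + 3 * h8 + 2 * h9 + 2 * h10 + h11
  have g1 : m2 = m2' := by linear_combination -h0 - h1 - h2 - 2 * h3 - 2 * h4 - h5 - h6 - h7 - 2 * h8 - h9 - 2 * h10
  have g2 : m3 = m3' := by linear_combination h0 + h1 + h2 + 2 * h3 + h4 + h5 + h6 + h7 + 2 * h8 + h9 + h10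
  have g3 : n1 = n1' := by linear_combination h0 + h1 + h2 + 2 * h3 + 2 * h4 + h5 + 2 * h6 + 3 * h8 + 2 * h9 + 2 * h10 + h11
  have g4 : n2 = n2' := by linear_combination -h4 - h6 - h10 - h11
  have g5 : n3 = n3' := by linear_combination h0 + 2 * h1 + h2 + 3 * h3 + 2 * h4 + h5 + 2 * h6 + h7 + 3 * h8 + 2 * h9 + h10 + h11
  have g6 : a1 = a1' := by linear_combination h0 + h2 + h3 + h4 + h5 + h6 + 2 * h8 + h10
  have g7 : a2 = a2' := by linear_combination h0 + h1 + h2 + h3 + h7 + 2 * h8 + h9 - h11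
  have g8 : b1 = b1' := by linear_combination h0 + h2 + h3 + h4 + h5 + h6 + h8 + h10
  have g9 : b2 = b2' := by linear_combination h0 + h3 + h4 + h5 + h6 + h8 + h10 + h11
  have g10 : c = c' := by linear_combination h0 + h1 + h2 + h7 + h8 + h9 - h11
  have g11 : d = d' := by linear_combination h0 + h1 + h2 + h7 + h8 + h9
  subst g0 g1 g2 g3 g4 g5 g6 g7 g8 g9 g10 g11
  rfl

lemma end_link (k : Fin 4 → ℤ) : (Sol [k 0, k 1, k 2, k 3] facEnd).encard =
    (patSet (k 0 + k 3) (k 2 + k 1) (k 1) 0 (-k 0)).card := by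
  rw [← Set.encard_coe_eq_coe_finsetCard, ← (patMap_inj k).encard_image]
  congr 1
  ext x
  simp only [Set.mem_image, Finset.mem_coe]
  constructor
  · rintro ⟨h1, h2, h3⟩
    obtain ⟨x0, x1, x2, x3, x4, x5, x6, x7, x8, x9, x10, x11, x12, x13, x14, x15, rfl⟩ := len16 x h1
    simp only [List.drop_succ_cons, List.drop_zero, List.cons.injEq, and_true] at h2
    obtain ⟨rfl, rfl, rfl, rfl⟩ := h2
    simp only [PosOn, facEnd, List.forall_mem_cons, ev, List.not_mem_nil, IsEmpty.forall_iff,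
      implies_true, and_true, zero_mul, zero_add] at h3
    obtain ⟨h0, h1, h2, h3, h4, h5, h6, h7, h8, h9, h10, h11, h12, h13, h14, h15, h16, h17, h18, h19, h20, h21, h22, h23, h24, h25, h26⟩ := h3
    refine ⟨⟨x0 + x1 + x2 + 2 * x3 + 2 * x4 + x5 + 2 * x6 + x7 + 3 * x8 + 2 * x9 + 2 * x10 + x11 - 2 * k 0 - 2 * k 1 - 2 * k 2 - 2 * k 3,
      -x0 - x1 - x2 - 2 * x3 - 2 * x4 - x5 - x6 - x7 - 2 * x8 - x9 - 2 * x10 + k 0 + 3 * k 1 + 2 * k 2 + 2 * k 3,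
      x0 + x1 + x2 + 2 * x3 + x4 + x5 + x6 + x7 + 2 * x8 + x9 + x10 - k 0 - 2 * k 1 - 2 * k 2 - 2 * k 3,
      x0 + x1 + x2 + 2 * x3 + 2 * x4 + x5 + 2 * x6 + 3 * x8 + 2 * x9 + 2 * x10 + x11 - 2 * k 0 - 2 * k 1 - 2 * k 2 - 2 * k 3,
      -x4 - x6 - x10 - x11 + k 0 + k 1,
      x0 + 2 * x1 + x2 + 3 * x3 + 2 * x4 + x5 + 2 * x6 + x7 + 3 * x8 + 2 * x9 + x10 + x11 - 2 * k 0 - 3 * k 1 - 3 * k 2 - 3 * k 3,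
      x0 + x2 + x3 + x4 + x5 + x6 + 2 * x8 + x10 - k 0 - k 1 - k 2 - k 3,
      x0 + x1 + x2 + x3 + x7 + 2 * x8 + x9 - x11 - k 1 - 2 * k 2 - k 3,
      x0 + x2 + x3 + x4 + x5 + x6 + x8 + x10 - k 0 - k 1 - k 2 - k 3,
      x0 + x3 + x4 + x5 + x6 + x8 + x10 + x11 - 2 * k 0 - k 1 - k 2 - k 3,
      x0 + x1 + x2 + x7 + x8 + x9 - x11 - k 1 - k 2 - k 3,
      x0 + x1 + x2 + x7 + x8 + x9 - k 0 - k 1 - k 2 - k 3⟩, ?_, ?_⟩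
    · simp only [patSet, Finset.mem_sigma, Finset.mem_Icc, max_le_iff]
      exact ⟨⟨by linarith only [h26], by linarith only [h9]⟩,
        ⟨by linarith only [h8], by linarith only [h18]⟩,
        ⟨⟨by linarith only [h4], by linarith only [h17]⟩, by linarith only [h10]⟩,
        ⟨by linarith only [h25], by linarith only [h19]⟩,
        ⟨by linarith only [h6], by linarith only [h11]⟩,
        ⟨by linarith only [h5], by linarith only [h16]⟩,
        ⟨by linarith only [h24], by linarith only [h12]⟩,
        ⟨⟨by linarith only [h13], by linarith only [h3]⟩, by linarith only [h7]⟩,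
        ⟨by linarith only [h20], by linarith only [h23]⟩,
        ⟨by linarith only [h14], by linarith only [h2]⟩,
        ⟨⟨by linarith only [h1], by linarith only [h21]⟩, by linarith only [h15]⟩,
        ⟨by linarith only [h22], by linarith only [h0]⟩⟩
    · simp only [patMap, List.cons.injEq, and_true]
      refine ⟨?_, ?_, ?_, ?_, ?_, ?_, ?_, ?_, ?_, ?_, ?_, ?_⟩ <;> ring
  · rintro ⟨⟨m1, m2, m3, n1, n2, n3, a1, a2, b1, b2, c, d⟩, h, rfl⟩
    simp only [patSet, Finset.mem_sigma, Finset.mem_Icc, max_le_iff] at h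
    obtain ⟨⟨h26, h9⟩, ⟨h8, h18⟩, ⟨⟨h4, h17⟩, h10⟩, ⟨h25, h19⟩, ⟨h6, h11⟩, ⟨h5, h16⟩,
      ⟨h24, h12⟩, ⟨⟨h13, h3⟩, h7⟩, ⟨h20, h23⟩, ⟨h14, h2⟩, ⟨⟨h1, h21⟩, h15⟩, ⟨h22, h0⟩⟩ := h
    refine ⟨rfl, rfl, ?_⟩
    simp only [PosOn, facEnd, patMap, List.forall_mem_cons, ev, List.not_mem_nil,
      IsEmpty.forall_iff, implies_true, and_true, zero_mul, zero_add]
    refine ⟨by linarith only [h0], by linarith only [h1], by linarith only [h2], by linarith only [h3], by linarith only [h4], by linarith only [h5], by linarith only [h6], by linarith only [h7], by linarith only [h8], by linarith only [h9], by linarith only [h10], by linarith only [h11], by linarith only [h12], by linarith only [h13], by linarith only [h14], by linarith only [h15], by linarith only [h16], by linarith only [h17], by linarith only [h18], by linarith only [h19], by linarith only [h20], by linarith only [h21], by linarith only [h22], by linarith only [h23], by linarith only [h24], by linarith only [h25], by linarith only [h26]⟩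

/-- Theorem 2 of the paper: |Σ(k)| equals the Weyl dimension of the irreducible
D4-module with highest weight k1ω1+k2ω2+k3ω3+k4ω4. -/
theorem ncard_sigmaSet_eq_weylDim (k : Fin 4 → ℤ) (hk : ∀ i, 0 ≤ k i) :
    (SigmaSet k).Finite ∧
      ((SigmaSet k).ncard : ℚ) =
        (let L1 : ℚ := 2 * (k 0 : ℚ) + 2 * (k 1 : ℚ) + (k 2 : ℚ) + (k 3 : ℚ) + 6
         let L2 : ℚ := 2 * (k 1 : ℚ) + (k 2 : ℚ) + (k 3 : ℚ) + 4
         let L3 : ℚ := (k 2 : ℚ) + (k 3 : ℚ) + 2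
         let L4 : ℚ := (k 3 : ℚ) - (k 2 : ℚ)
         ((L1 ^ 2 - L2 ^ 2) * (L1 ^ 2 - L3 ^ 2) * (L1 ^ 2 - L4 ^ 2) *
            (L2 ^ 2 - L3 ^ 2) * (L2 ^ 2 - L4 ^ 2) * (L3 ^ 2 - L4 ^ 2)) / 17694720) := by
  have h : (SigmaSet k).encard = cD4 (k 0 + k 3) (k 2 + k 1) (k 1) 0 (-k 0) := by
    rw [start_link, run_sound _ _ _ _ chain_ok, end_link, card_patSet]
  have h0 := hk 0
  have h1 := hk 1
  have h2 := hk 2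
  have h3 := hk 3
  refine ⟨Set.finite_of_encard_eq_coe h, ?_⟩
  rw [Set.ncard_def, h, ENat.toNat_natCast, cD4_eq _ _ _ _ _ (by omega) (by omega) (by omega)]
  simp only [wD4]
  push_cast
  ring
end
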